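/- Uniform Morawetz estimate: let n ≥ 3. There is a constant C depending only on n such that for every ε > 0 and every finite-energy solution φ of the homogeneous wave equation □φ = 0 on ℝ^{n+1}, ∫_{−∞}^{∞} ∫_{ℝⁿ} ( ε (ε+r)^{−2} |∂_r φ|² + (ε+r)^{−1} |∇̸ φ|² ) dx dt ≤ C ( ‖∇_x φ(0)‖²_{L²} + ‖∂_t φ(0)‖²_{L²} ), where r = |x|, ∂_r φ is the radial derivative, and |∇̸ φ|² = |∇_x φ|² − |∂_r φ|² is the squared angular part of the spatial gradient. The constant C is independent of ε. -/

import Mathlib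

open MeasureTheory Real Complex ENNReal
open scoped FourierTransform RealInnerProductSpace ComplexConjugate

noncomputable section

/-- Euclidean space `ℝⁿ`. -/
abbrev Eucl (n : ℕ) := EuclideanSpace ℝ (Fin n)

/-- A function on `ℝⁿ` is unit frequency if its Fourier transform is supported
in the annulus `1/2 < ‖ξ‖ < 2`. -/
def UnitFrequency {n : ℕ} (f : Eucl n → ℂ) : Prop :=
  ∀ ξ : Eucl n, 𝓕 f ξ ≠ 0 → 1 / 2 < ‖ξ‖ ∧ ‖ξ‖ < 2

/-- The half-wave propagator `e^{it√(−Δ)} f (x) = ∫ e^{2πit|ξ|} e^{2πi x·ξ} f̂(ξ) dξ`. -/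
def waveProp {n : ℕ} (f : Eucl n → ℂ) (t : ℝ) (x : Eucl n) : ℂ :=
  ∫ ξ : Eucl n,
    Complex.exp (2 * (π : ℂ) * Complex.I * (t : ℂ) * (‖ξ‖ : ℂ)) *
      Complex.exp (2 * (π : ℂ) * Complex.I * ((⟪x, ξ⟫ : ℝ) : ℂ)) * 𝓕 f ξ

/-- The mixed space-time norm `‖u‖_{L^q_t(L^r_x)}`. -/
def mixedNorm {n : ℕ} (q r : ℝ≥0∞) (u : ℝ → Eucl n → ℂ) : ℝ≥0∞ :=
  if q = ∞ then essSup (fun t : ℝ => eLpNorm (u t) r volume) volume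
  else (∫⁻ t : ℝ, eLpNorm (u t) r volume ^ q.toReal) ^ (1 / q.toReal)

/-- Time derivative of a space-time function. -/
def timeDeriv {n : ℕ} (u : ℝ → Eucl n → ℂ) (t : ℝ) (x : Eucl n) : ℂ :=
  deriv (fun s => u s x) t

/-- The spatial Laplacian `Δf(x) = Σᵢ ∂²f/∂xᵢ²`. -/
def lapE {n : ℕ} (f : Eucl n → ℂ) (x : Eucl n) : ℂ :=
  ∑ i : Fin n,
    fderiv ℝ (fun y => fderiv ℝ f y (EuclideanSpace.single i (1 : ℝ))) x
      (EuclideanSpace.single i (1 : ℝ))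

/-- `u` is a (classical, smooth) solution of the wave equation `□u = −∂ₜ²u + Δu = 0`. -/
def IsWaveSolution {n : ℕ} (u : ℝ → Eucl n → ℂ) : Prop :=
  ContDiff ℝ (⊤ : ℕ∞) (fun p : ℝ × Eucl n => u p.1 p.2) ∧
    ∀ t x, timeDeriv (timeDeriv u) t x = lapE (u t) x

/-- A spherically symmetric (radial) function. -/
def IsRadial {n : ℕ} (f : Eucl n → ℂ) : Prop :=
  ∀ x y : Eucl n, ‖x‖ = ‖y‖ → f x = f y

/-- The homogeneous Sobolev norm `‖f‖_{Ḣ^γ} = ‖ |ξ|^γ f̂ ‖_{L²}`. -/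
def homSobolevNorm {n : ℕ} (γ : ℝ) (f : Eucl n → ℂ) : ℝ≥0∞ :=
  eLpNorm (fun ξ : Eucl n => ((‖ξ‖ ^ γ : ℝ) : ℂ) * 𝓕 f ξ) 2 volume

/-- `H` is (the extension of) a spherical harmonic of degree `l` on `ℝⁿ`:
a smooth, harmonic, degree-`l` homogeneous function. -/
def IsSphericalHarmonic (n l : ℕ) (H : Eucl n → ℂ) : Prop :=
  ContDiff ℝ (⊤ : ℕ∞) H ∧ (∀ (c : ℝ) (x : Eucl n), H (c • x) = (c : ℂ) ^ l * H x) ∧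
    ∀ x, lapE H x = 0

/-- A function is localized at angular frequency `N` if its spherical harmonic
expansion only involves degrees `l` with `N/2 ≤ l ≤ 4N`. -/
def AngularlyLocalized (n N : ℕ) (f : Eucl n → ℂ) : Prop :=
  ∃ (I : Finset (ℕ × ℕ)) (Y : ℕ × ℕ → Eucl n → ℂ) (c : ℕ × ℕ → ℝ → ℂ),
    (∀ p ∈ I, ((N : ℝ) / 2 ≤ (p.1 : ℝ) ∧ (p.1 : ℝ) ≤ 4 * N) ∧
      IsSphericalHarmonic n p.1 (Y p)) ∧
    ∀ x : Eucl n, x ≠ 0 → f x = ∑ p ∈ I, c p ‖x‖ * Y p (‖x‖⁻¹ • x)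

/-- The normalized surface measure on the unit sphere `S^{n-1} ⊆ ℝⁿ`. -/
def unitSphereMeasure (n : ℕ) : Measure (Metric.sphere (0 : Eucl n) 1) :=
  (((volume : Measure (Eucl n)).toSphere Set.univ)⁻¹) • (volume : Measure (Eucl n)).toSphere

/-- An `L²`-type spherical harmonics expansion of a function `f` on `ℝⁿ`, with an
orthonormal family of spherical harmonics. -/
structure SphExpansion (n : ℕ) (f : Eucl n → ℂ) where
  /-- number of harmonics used in each degree -/
  d : ℕ → ℕ
  /-- the orthonormal family of spherical harmonics, `Y (l,i)` of degree `l` -/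
  Y : ℕ × ℕ → Eucl n → ℂ
  /-- the (radial) coefficients -/
  c : ℕ × ℕ → ℝ → ℂ
  harmonic : ∀ p : ℕ × ℕ, p.2 < d p.1 → IsSphericalHarmonic n p.1 (Y p)
  coeff_zero : ∀ p : ℕ × ℕ, ¬p.2 < d p.1 → ∀ r : ℝ, c p r = 0
  orthonormal : ∀ p q : ℕ × ℕ, p.2 < d p.1 → q.2 < d q.1 →
    ∫ ω : Metric.sphere (0 : Eucl n) 1,
        Y p (ω : Eucl n) * conj (Y q (ω : Eucl n)) ∂(unitSphereMeasure n) =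
      if p = q then 1 else 0
  expand : ∀ x : Eucl n, x ≠ 0 →
    f x = ∑' p : ℕ × ℕ, c p ‖x‖ * Y p (‖x‖⁻¹ • x)

/-- The fractional angular derivative `|Ω|^s f = Σ [l(n+l−2)]^{s/2} c^l_i Y^l_i`,
computed from a spherical harmonics expansion of `f`. -/
def SphExpansion.omegaPow {n : ℕ} {f : Eucl n → ℂ} (e : SphExpansion n f) (s : ℝ) :
    Eucl n → ℂ := fun x =>
  ∑' p : ℕ × ℕ,
    ((((p.1 * (n + p.1 - 2) : ℕ) : ℝ) ^ (s / 2) : ℝ) : ℂ) * e.c p ‖x‖ * e.Y p (‖x‖⁻¹ • x)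

/-- The Bessel function of order `s`, given by the integral formula
`J_s(y) = ((−i)^s/(4π)) ∫_{−2π}^{2π} e^{iy cos θ} e^{−isθ} dθ`. -/
def besselJ (s : ℝ) (y : ℝ) : ℂ :=
  (-Complex.I) ^ (s : ℂ) / (4 * (π : ℂ)) *
    ∫ θ in (-(2 * π) : ℝ)..(2 * π),
      Complex.exp (Complex.I * ((y * Real.cos θ : ℝ) : ℂ)) *
        Complex.exp (-(Complex.I * (s : ℂ) * (θ : ℂ)))

/-- The Hankel–φ wave packet `ψ^l_m(r) = ∫_0^∞ J_{(n−2)/2+l}(2πrρ) e^{−2πimρ} χ(ρ) dρ`. -/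
def hankelPsi (n : ℕ) (χ : ℝ → ℝ) (l : ℕ) (m r : ℝ) : ℂ :=
  ∫ ρ in Set.Ioi (0 : ℝ),
    besselJ (((n : ℝ) - 2) / 2 + l) (2 * π * r * ρ) *
      Complex.exp (-(2 * (π : ℂ) * Complex.I * (m : ℂ) * (ρ : ℂ))) * ((χ ρ : ℝ) : ℂ)

/-- `Q` is a partition of `ℝⁿ` into (axis-parallel, half-open) cubes of side length `∼ L`. -/
def IsCubePartition {ι : Type} (n : ℕ) (L : ℝ) (Q : ι → Set (Eucl n)) : Prop :=
  (∀ x : Eucl n, ∃! i : ι, x ∈ Q i) ∧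
    ∀ i : ι, ∃ (a : Eucl n) (s : ℝ), L / 2 ≤ s ∧ s ≤ 2 * L ∧
      Q i = {x : Eucl n | ∀ j : Fin n, a j ≤ x j ∧ x j < a j + s}

/-- The coarse scale norm `(Σ_α ‖f‖_{L²(Q_α)}^r)^{1/r}` over a family of cubes. -/
def cubeNorm {ι : Type} {n : ℕ} (Q : ι → Set (Eucl n)) (r : ℝ≥0∞) (f : Eucl n → ℂ) :
    ℝ≥0∞ :=
  if r = ∞ then ⨆ i : ι, eLpNorm f 2 (volume.restrict (Q i))
  else (∑' i : ι, eLpNorm f 2 (volume.restrict (Q i)) ^ r.toReal) ^ (1 / r.toReal)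

/-- The squared length of the spatial gradient, `|∇f(x)|² = Σᵢ |∂ᵢf(x)|²`. -/
def gradSq {n : ℕ} (f : Eucl n → ℂ) (x : Eucl n) : ℝ :=
  ∑ i : Fin n, ‖fderiv ℝ f x (EuclideanSpace.single i (1 : ℝ))‖ ^ 2

/-- The squared radial derivative `|∂_r f(x)|² = |(x/|x|)·∇f(x)|²`. -/
def radSq {n : ℕ} (f : Eucl n → ℂ) (x : Eucl n) : ℝ :=
  ‖fderiv ℝ f x (‖x‖⁻¹ • x)‖ ^ 2

end

/-!
Pair the wave equation with the multiplier `H x·∇U + G U`, where `H = (ε + √(ε² + |x|²))⁻¹` and `G`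
is half the divergence of the vector field `H x`, so that the Lagrangian density drops out. For
`n ≥ 3` one has `ΔG ≤ 0`, so the term in `|U|²` has a favourable sign, and the remaining bulk term
`H |∇U|² + H' |x·∇U|²` dominates the Morawetz density uniformly in `ε`. The boundary terms at fixed
times are bounded by the energy, using Hardy's inequality.

No decay of `U` at infinity is available, so the multiplier is cut off at radius `R → ∞`. The errors
live where `R ≤ |x| ≤ 2R` and `|t| ≤ R`; finite speed of propagation bounds the energy there, and
subtracting a constant from `U` allows Poincaré's inequality to bound `|U|²`.
-/

namespace Morawetz

open Set Filter Topology

noncomputable section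

/-- Space-time `ℝ × ℝⁿ`, with points `(t, x)`. -/
abbrev SpaceTime (n : ℕ) := ℝ × Eucl n

/-- The `i`-th standard basis vector of `ℝⁿ`. -/
abbrev unitVec {n : ℕ} (i : Fin n) : Eucl n := EuclideanSpace.single i 1

section DirectionalDerivative

variable {E V : Type*} [NormedAddCommGroup E] [NormedSpace ℝ E] [NormedAddCommGroup V]

/-- The derivative of `F` in the direction `v`, as a function on `E`. -/
def dirDeriv [NormedSpace ℝ V] (v : E) (F : E → V) (p : E) : V := fderiv ℝ F p v

section NormedSpace

variable [NormedSpace ℝ V]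

lemma contDiff_dirDeriv {F : E → V} {k : ℕ} (hF : ContDiff ℝ (k + 1) F) (v : E) :
    ContDiff ℝ k (dirDeriv v F) :=
  (hF.fderiv_right le_rfl).clm_apply contDiff_const

lemma continuous_dirDeriv {F : E → V} (hF : ContDiff ℝ 1 F) (v : E) :
    Continuous (dirDeriv v F) :=
  (hF.continuous_fderiv one_ne_zero).clm_apply continuous_const

lemma dirDeriv_comm {F : E → V} (hF : ContDiff ℝ 2 F) (v w : E) :
    dirDeriv v (dirDeriv w F) = dirDeriv w (dirDeriv v F) := by
  ext p
  have hd : DifferentiableAt ℝ (fderiv ℝ F) p :=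
    (hF.fderiv_right (m := 1) (by norm_num)).differentiable one_ne_zero p
  unfold dirDeriv
  rw [fderiv_clm_apply hd (by fun_prop), fderiv_clm_apply hd (by fun_prop)]
  simpa using (hF.contDiffAt.isSymmSndFDerivAt (by simp)).eq v w

lemma dirDeriv_add {F G : E → V} {p : E} (hF : DifferentiableAt ℝ F p)
    (hG : DifferentiableAt ℝ G p) (v : E) :
    dirDeriv v (fun q => F q + G q) p = dirDeriv v F p + dirDeriv v G p := by
  simp [dirDeriv, fderiv_fun_add hF hG]

lemma dirDeriv_sub_const (F : E → V) (c : V) (v : E) :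
    dirDeriv v (fun q => F q - c) = dirDeriv v F := by
  ext
  simp [dirDeriv, fderiv_sub_const]

lemma dirDeriv_smul {k : E → ℝ} {F : E → V} {p : E} (hk : DifferentiableAt ℝ k p)
    (hF : DifferentiableAt ℝ F p) (v : E) :
    dirDeriv v (fun q => k q • F q) p = k p • dirDeriv v F p + dirDeriv v k p • F p := by
  simp [dirDeriv, fderiv_fun_smul hk hF]

lemma dirDeriv_mul {k l : E → ℝ} {p : E} (hk : DifferentiableAt ℝ k p)
    (hl : DifferentiableAt ℝ l p) (v : E) :
    dirDeriv v (fun q => k q * l q) p = k p * dirDeriv v l p + dirDeriv v k p * l p :=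
  dirDeriv_smul hk hl v

end NormedSpace

section InnerProductSpace

variable [InnerProductSpace ℝ V]

lemma dirDeriv_inner {F G : E → V} {p : E} (hF : DifferentiableAt ℝ F p)
    (hG : DifferentiableAt ℝ G p) (v : E) :
    dirDeriv v (fun q => ⟪F q, G q⟫) p = ⟪F p, dirDeriv v G p⟫ + ⟪dirDeriv v F p, G p⟫ :=
  fderiv_inner_apply ℝ hF hG v

lemma dirDeriv_norm_sq {F : E → V} {p : E} (hF : DifferentiableAt ℝ F p) (v : E) :
    dirDeriv v (fun q => ‖F q‖ ^ 2) p = 2 * ⟪F p, dirDeriv v F p⟫ := by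
  simp only [← real_inner_self_eq_norm_sq]
  rw [dirDeriv_inner hF hF, real_inner_comm (F p)]
  ring

end InnerProductSpace

end DirectionalDerivative

local notation "∂ₜ" => dirDeriv ((1, 0) : SpaceTime _)
local notation:max "∂ₓ" i:max => dirDeriv ((0, unitVec i) : SpaceTime _)

section EuclideanGradient

variable {n : ℕ} {V : Type*} [NormedAddCommGroup V] [NormedSpace ℝ V]

lemma inner_unitVec (x : Eucl n) (i : Fin n) : ⟪x, unitVec i⟫ = x i := by
  simp [EuclideanSpace.inner_single_right]

lemma sum_apply_smul_unitVec (x : Eucl n) : ∑ i, x i • unitVec i = x := by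
  simpa using (EuclideanSpace.basisFun (Fin n) ℝ).sum_repr x

/-- `|∇f(x)|²`, the version of `gradSq` for functions with values in a normed space. -/
def gradNormSq (f : Eucl n → V) (x : Eucl n) : ℝ :=
  ∑ i, ‖dirDeriv (unitVec i) f x‖ ^ 2

lemma dirDeriv_eq_sum (f : Eucl n → V) (x v : Eucl n) :
    dirDeriv v f x = ∑ i, v i • dirDeriv (unitVec i) f x := by
  conv_lhs => rw [← sum_apply_smul_unitVec v]
  simp [dirDeriv, map_sum]

lemma norm_sq_dirDeriv_le (f : Eucl n → V) (x v : Eucl n) :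
    ‖dirDeriv v f x‖ ^ 2 ≤ ‖v‖ ^ 2 * gradNormSq f x := by
  calc ‖dirDeriv v f x‖ ^ 2
      ≤ (∑ i, |v i| * ‖dirDeriv (unitVec i) f x‖) ^ 2 := by
        rw [dirDeriv_eq_sum]
        gcongr
        simpa only [norm_smul, Real.norm_eq_abs] using
          norm_sum_le _ fun i => v i • dirDeriv (unitVec i) f x
    _ ≤ (∑ i, |v i| ^ 2) * gradNormSq f x := Finset.sum_mul_sq_le_sq_mul_sq ..
    _ = ‖v‖ ^ 2 * gradNormSq f x := by simp only [EuclideanSpace.norm_sq_eq, Real.norm_eq_abs]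

lemma continuous_gradNormSq {f : Eucl n → V} (hf : ContDiff ℝ 1 f) :
    Continuous (gradNormSq f) :=
  continuous_finsetSum _ fun _ _ => (continuous_dirDeriv hf _).norm.pow 2

lemma gradNormSq_nonneg (f : Eucl n → V) (x : Eucl n) : 0 ≤ gradNormSq f x :=
  Finset.sum_nonneg fun _ _ => sq_nonneg _

end EuclideanGradient

section Slices

variable {n : ℕ} {V : Type*} [NormedAddCommGroup V] [NormedSpace ℝ V]

lemma dirDeriv_slice {F : SpaceTime n → V} {p : SpaceTime n} (hF : DifferentiableAt ℝ F p)
    (v : Eucl n) : dirDeriv v (fun y => F (p.1, y)) p.2 = dirDeriv (0, v) F p := by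
  have := HasFDerivAt.comp (g := F) (f := fun y => (p.1, y)) p.2 hF.hasFDerivAt
    (hasFDerivAt_prodMk_right p.1 p.2)
  simpa [dirDeriv, Function.comp_def] using congrArg (· v) this.fderiv

lemma hasDerivAt_time_slice {F : SpaceTime n → V} {p : SpaceTime n}
    (hF : DifferentiableAt ℝ F p) : HasDerivAt (fun s => F (s, p.2)) (∂ₜ F p) p.1 := by
  simpa [dirDeriv, Function.comp_def] using
    (hF.hasFDerivAt.comp p.1 (hasFDerivAt_prodMk_left p.1 p.2)).hasDerivAt

lemma contDiff_slice {F : SpaceTime n → V} {k : WithTop ℕ∞} (hF : ContDiff ℝ k F) (t : ℝ) :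
    ContDiff ℝ k fun x => F (t, x) :=
  hF.comp (contDiff_const.prodMk contDiff_id)

lemma gradNormSq_slice {F : SpaceTime n → V} {p : SpaceTime n} (hF : DifferentiableAt ℝ F p) :
    gradNormSq (fun x => F (p.1, x)) p.2 = ∑ i, ‖∂ₓ i F p‖ ^ 2 := by
  simp only [gradNormSq, dirDeriv_slice hF]

end Slices

section Divergence

variable {n : ℕ}

lemma dirDeriv_coord (i : Fin n) (v x : Eucl n) :
    dirDeriv v (fun y : Eucl n => y i) x = v i := by
  change fderiv ℝ (EuclideanSpace.proj (𝕜 := ℝ) i) x v = v i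
  rw [ContinuousLinearMap.fderiv]
  rfl

lemma div_coord_mul {φ : Eucl n → ℝ} {x : Eucl n} (hφ : DifferentiableAt ℝ φ x) :
    ∑ i, dirDeriv (unitVec i) (fun y => y i * φ y) x = n * φ x + dirDeriv x φ x := by
  have (i : Fin n) : dirDeriv (unitVec i) (fun y => y i * φ y) x =
      x i • dirDeriv (unitVec i) φ x + φ x := by
    rw [dirDeriv_mul (by fun_prop) hφ, dirDeriv_coord]
    simp
  rw [dirDeriv_eq_sum φ x x]
  simp [this, Finset.sum_add_distrib, add_comm]

lemma div_space_coord_mul {φ : SpaceTime n → ℝ} {p : SpaceTime n}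
    (hφ : DifferentiableAt ℝ φ p) :
    ∑ i, ∂ₓ i (fun q => q.2 i * φ q) p = n * φ p + dirDeriv (0, p.2) φ p := by
  rw [← dirDeriv_slice hφ,
    ← div_coord_mul (φ := fun y => φ (p.1, y)) (hφ.comp p.2 (by fun_prop))]
  exact Finset.sum_congr rfl fun i _ =>
    (dirDeriv_slice (F := fun q : SpaceTime n => q.2 i * φ q) (by fun_prop) _).symm

lemma hasCompactSupport_of_norm_le {f : Eucl n → ℝ} {ρ : ℝ} (h : ∀ x, ρ ≤ ‖x‖ → f x = 0) :
    HasCompactSupport f :=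
  HasCompactSupport.intro (isCompact_closedBall 0 ρ) fun x hx =>
    h x (by simpa using (not_le.1 (mt mem_closedBall_zero_iff.2 hx)).le)

lemma integrable_dirDeriv {f : Eucl n → ℝ} (hf : ContDiff ℝ 1 f) (hs : HasCompactSupport f)
    (v : Eucl n) : Integrable (dirDeriv v f) :=
  (continuous_dirDeriv hf v).integrable_of_hasCompactSupport (hs.fderiv_apply (𝕜 := ℝ) v)

lemma integral_dirDeriv {f : Eucl n → ℝ} (hf : ContDiff ℝ 1 f) (hs : HasCompactSupport f)
    (v : Eucl n) : ∫ x, dirDeriv v f x = 0 := by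
  simpa using! integral_mul_fderiv_eq_neg_fderiv_mul_of_integrable (𝕜 := ℝ)
    (μ := (volume : Measure (Eucl n))) (f := fun _ => (1 : ℝ)) (g := f) (v := v)
    (by simp) (by simpa using! integrable_dirDeriv hf hs v)
    (by simpa using hf.continuous.integrable_of_hasCompactSupport hs)
    (fun _ _ => by fun_prop) (fun x _ => hf.differentiable one_ne_zero x)

lemma integrable_div_coord_mul {φ : Eucl n → ℝ} (hφ : ContDiff ℝ 1 φ)
    (hs : HasCompactSupport φ) : Integrable fun x => n * φ x + dirDeriv x φ x := by
  simp only [← div_coord_mul (hφ.differentiable one_ne_zero _)]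
  exact integrable_finsetSum _ fun i _ =>
    integrable_dirDeriv (f := fun y => y i * φ y) (by fun_prop) hs.mul_left _

lemma integral_div_coord_mul {φ : Eucl n → ℝ} (hφ : ContDiff ℝ 1 φ)
    (hs : HasCompactSupport φ) : ∫ x, (n * φ x + dirDeriv x φ x) = 0 := by
  have hc (i : Fin n) : ContDiff ℝ 1 fun y : Eucl n => y i * φ y := by fun_prop
  have hcs (i : Fin n) : HasCompactSupport fun y : Eucl n => y i * φ y := hs.mul_left
  simp only [← div_coord_mul (hφ.differentiable one_ne_zero _)]
  rw [integral_finsetSum _ fun i _ => integrable_dirDeriv (hc i) (hcs i) _]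
  exact Finset.sum_eq_zero fun i _ => integral_dirDeriv (hc i) (hcs i) _

lemma dirDeriv_time_eq_zero {P : SpaceTime n → ℝ} (hP : ContDiff ℝ 1 P) {a b : ℝ} (hab : a < b)
    {x : Eucl n} (h : ∀ t ∈ Icc a b, P (t, x) = 0) {t : ℝ} (ht : t ∈ Icc a b) :
    ∂ₜ P (t, x) = 0 := by
  have h₁ := (hasDerivAt_time_slice (hP.differentiable one_ne_zero (t, x))).hasDerivWithinAt
    (s := Icc a b)
  exact (uniqueDiffOn_Icc hab t ht).eq_deriv _ h₁
    ((hasDerivWithinAt_const t _ (0 : ℝ)).congr h (h t ht))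

/-- The slab `{a ≤ t ≤ b}` in space-time. -/
def slab (n : ℕ) (a b : ℝ) : Set (SpaceTime n) := Icc a b ×ˢ univ

lemma measurableSet_slab {a b : ℝ} : MeasurableSet (slab n a b) :=
  measurableSet_Icc.prod MeasurableSet.univ

lemma volume_restrict_slab (a b : ℝ) :
    (volume : Measure (SpaceTime n)).restrict (slab n a b) =
      (volume.restrict (Icc a b)).prod volume := by
  rw [slab, Measure.volume_eq_prod, ← Measure.prod_restrict, Measure.restrict_univ]

lemma integrableOn_slab {f : SpaceTime n → ℝ} (hf : Continuous f) {a b ρ : ℝ}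
    (h : ∀ t ∈ Icc a b, ∀ x, ρ ≤ ‖x‖ → f (t, x) = 0) : IntegrableOn f (slab n a b) := by
  have hK : IsCompact (Icc a b ×ˢ Metric.closedBall (0 : Eucl n) ρ) :=
    isCompact_Icc.prod (isCompact_closedBall _ _)
  refine (hf.continuousOn.integrableOn_compact hK).of_forall_sdiff_eq_zero measurableSet_slab ?_
  rintro ⟨t, x⟩ ⟨⟨ht, -⟩, hx⟩
  refine h t ht x (le_of_lt ?_)
  simpa [ht.1, ht.2] using hx

lemma integral_slab_dirDeriv_time {P : SpaceTime n → ℝ} (hP : ContDiff ℝ 1 P) {a b ρ : ℝ}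
    (hab : a < b) (h : ∀ t ∈ Icc a b, ∀ x, ρ ≤ ‖x‖ → P (t, x) = 0) :
    ∫ p in slab n a b, ∂ₜ P p = (∫ x, P (b, x)) - ∫ x, P (a, x) := by
  have hint := integrableOn_slab (continuous_dirDeriv hP (1, 0)) fun t ht x hx =>
    dirDeriv_time_eq_zero hP hab (fun s hs => h s hs x hx) ht
  have hslice {t : ℝ} (ht : t ∈ Icc a b) : Integrable fun x => P (t, x) :=
    (contDiff_slice hP t).continuous.integrable_of_hasCompactSupport
      (hasCompactSupport_of_norm_le (h t ht))
  rw [IntegrableOn, volume_restrict_slab] at hint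
  rw [volume_restrict_slab, integral_prod_symm _ hint,
    ← integral_sub (hslice (right_mem_Icc.2 hab.le)) (hslice (left_mem_Icc.2 hab.le))]
  refine integral_congr_ae (ae_of_all _ fun x => ?_)
  change ∫ t in Icc a b, ∂ₜ P (t, x) = P (b, x) - P (a, x)
  rw [integral_Icc_eq_integral_Ioc, ← intervalIntegral.integral_of_le hab.le]
  exact intervalIntegral.integral_eq_sub_of_hasDerivAt (f := fun t => P (t, x))
    (fun t _ => hasDerivAt_time_slice (hP.differentiable one_ne_zero (t, x)))
    (Continuous.intervalIntegrable
      ((continuous_dirDeriv hP (1, 0)).comp (g := ∂ₜ P) (by fun_prop)) a b)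

lemma dirDeriv_space_eq_zero {Q : SpaceTime n → ℝ} (hQ : ContDiff ℝ 1 Q) {t ρ : ℝ}
    (h : ∀ x, ρ ≤ ‖x‖ → Q (t, x) = 0) (v : Eucl n) {x : Eucl n} (hx : ρ < ‖x‖) :
    dirDeriv (0, v) Q (t, x) = 0 := by
  rw [← dirDeriv_slice (hQ.differentiable one_ne_zero _)]
  have : (fun y => Q (t, y)) =ᶠ[𝓝 x] fun _ => 0 := by
    filter_upwards [continuousAt_const.eventually_lt continuous_norm.continuousAt hx] with y hy
      using h y hy.le
  simp [dirDeriv, this.fderiv_eq]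

lemma integral_slab_dirDeriv_space {Q : SpaceTime n → ℝ} (hQ : ContDiff ℝ 1 Q) {a b ρ : ℝ}
    (h : ∀ t ∈ Icc a b, ∀ x, ρ ≤ ‖x‖ → Q (t, x) = 0) (v : Eucl n) :
    IntegrableOn (dirDeriv (0, v) Q) (slab n a b) ∧
      ∫ p in slab n a b, dirDeriv (0, v) Q p = 0 := by
  have hint := integrableOn_slab (ρ := ρ + 1) (continuous_dirDeriv hQ (0, v))
    fun t ht x hx => dirDeriv_space_eq_zero hQ (h t ht) v (by linarith)
  refine ⟨hint, ?_⟩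
  rw [IntegrableOn, volume_restrict_slab] at hint
  rw [volume_restrict_slab, integral_prod _ hint]
  refine setIntegral_eq_zero_of_forall_eq_zero fun t ht => ?_
  calc ∫ x, dirDeriv (0, v) Q (t, x) = ∫ x, dirDeriv v (fun y => Q (t, y)) x :=
        integral_congr_ae (ae_of_all _ fun x =>
          (dirDeriv_slice (hQ.differentiable one_ne_zero (t, x)) v).symm)
    _ = 0 := integral_dirDeriv (contDiff_slice hQ t) (hasCompactSupport_of_norm_le (h t ht)) v

theorem integral_slab_div {P : SpaceTime n → ℝ} {Q : Fin n → SpaceTime n → ℝ}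
    (hP : ContDiff ℝ 1 P) (hQ : ∀ i, ContDiff ℝ 1 (Q i)) {a b ρ : ℝ} (hab : a < b)
    (hP₀ : ∀ t ∈ Icc a b, ∀ x, ρ ≤ ‖x‖ → P (t, x) = 0)
    (hQ₀ : ∀ i, ∀ t ∈ Icc a b, ∀ x, ρ ≤ ‖x‖ → Q i (t, x) = 0) :
    ∫ p in slab n a b, (∂ₜ P p - ∑ i, ∂ₓ i (Q i) p) = (∫ x, P (b, x)) - ∫ x, P (a, x) := by
  have hspace (i : Fin n) := integral_slab_dirDeriv_space (hQ i) (hQ₀ i) (unitVec i)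
  have htime : IntegrableOn (∂ₜ P) (slab n a b) :=
    integrableOn_slab (continuous_dirDeriv hP (1, 0)) fun t ht x hx =>
      dirDeriv_time_eq_zero hP hab (fun s hs => hP₀ s hs x hx) ht
  rw [integral_sub htime (integrable_finsetSum _ fun i _ => (hspace i).1),
    integral_finsetSum _ fun i _ => (hspace i).1, integral_slab_dirDeriv_time hP hab hP₀]
  simp [fun i => (hspace i).2]

end Divergence

section WaveEquation

variable {n : ℕ} {V : Type*} [NormedAddCommGroup V] [InnerProductSpace ℝ V]
  {U : SpaceTime n → V} {p : SpaceTime n}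

/-- `U` is a classical (twice continuously differentiable) solution of `□U = 0`, with values in
a real inner product space. -/
structure IsWave (U : SpaceTime n → V) : Prop where
  contDiff : ContDiff ℝ 2 U
  wave : ∀ p, ∂ₜ (∂ₜ U) p = ∑ i, ∂ₓ i (∂ₓ i U) p

/-- Twice the usual energy density: `|∂ₜU|² + |∇U|²`. -/
def energyDensity (U : SpaceTime n → V) (p : SpaceTime n) : ℝ :=
  ‖∂ₜ U p‖ ^ 2 + ∑ i, ‖∂ₓ i U p‖ ^ 2

/-- Twice the Lagrangian density of the wave equation: `|∂ₜU|² - |∇U|²`. -/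
def lagrangianDensity (U : SpaceTime n → V) (p : SpaceTime n) : ℝ :=
  ‖∂ₜ U p‖ ^ 2 - ∑ i, ‖∂ₓ i U p‖ ^ 2

lemma energyDensity_nonneg (U : SpaceTime n → V) (p : SpaceTime n) : 0 ≤ energyDensity U p :=
  add_nonneg (sq_nonneg _) (Finset.sum_nonneg fun _ _ => sq_nonneg _)

lemma abs_lagrangianDensity_le (U : SpaceTime n → V) (p : SpaceTime n) :
    |lagrangianDensity U p| ≤ energyDensity U p := by
  have hN : 0 ≤ ∑ i, ‖∂ₓ i U p‖ ^ 2 := Finset.sum_nonneg fun _ _ => sq_nonneg _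
  unfold lagrangianDensity energyDensity
  exact abs_le.2 ⟨by linarith [sq_nonneg ‖∂ₜ U p‖], by linarith⟩

namespace IsWave

lemma contDiff_dirDeriv (hU : IsWave U) (v : SpaceTime n) : ContDiff ℝ 1 (dirDeriv v U) :=
  Morawetz.contDiff_dirDeriv (k := 1) (by simpa [one_add_one_eq_two] using hU.contDiff) v

lemma differentiableAt_dirDeriv (hU : IsWave U) (v : SpaceTime n) :
    DifferentiableAt ℝ (dirDeriv v U) p :=
  (hU.contDiff_dirDeriv v).differentiable one_ne_zero p

lemma differentiableAt (hU : IsWave U) : DifferentiableAt ℝ U p :=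
  hU.contDiff.differentiable two_ne_zero p

lemma contDiff_energyDensity (hU : IsWave U) : ContDiff ℝ 1 (energyDensity U) :=
  ((hU.contDiff_dirDeriv _).norm_sq ℝ).add
    (ContDiff.sum fun _ _ => (hU.contDiff_dirDeriv _).norm_sq ℝ)

lemma contDiff_lagrangianDensity (hU : IsWave U) : ContDiff ℝ 1 (lagrangianDensity U) :=
  ((hU.contDiff_dirDeriv _).norm_sq ℝ).sub
    (ContDiff.sum fun _ _ => (hU.contDiff_dirDeriv _).norm_sq ℝ)

lemma dirDeriv_lagrangianDensity (hU : IsWave U) (v : SpaceTime n) :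
    dirDeriv v (lagrangianDensity U) p =
      2 * (⟪∂ₜ U p, dirDeriv v (∂ₜ U) p⟫ - ∑ i, ⟪∂ₓ i U p, dirDeriv v (∂ₓ i U) p⟫) := by
  have hd (w : SpaceTime n) : DifferentiableAt ℝ (fun q => ‖dirDeriv w U q‖ ^ 2) p :=
    (hU.differentiableAt_dirDeriv w).norm_sq ℝ
  change fderiv ℝ (fun q => ‖∂ₜ U q‖ ^ 2 - ∑ i, ‖∂ₓ i U q‖ ^ 2) p v = _
  rw [fderiv_fun_sub (hd _) (.fun_sum fun _ _ => hd _), fderiv_fun_sum fun _ _ => hd _]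
  simp only [sub_apply, sum_apply]
  change dirDeriv v _ p - ∑ i, dirDeriv v _ p = _
  simp only [dirDeriv_norm_sq (hU.differentiableAt_dirDeriv _), mul_sub, Finset.mul_sum]

lemma sub_const (hU : IsWave U) (c : V) : IsWave fun p => U p - c where
  contDiff := hU.contDiff.sub contDiff_const
  wave := by simpa only [dirDeriv_sub_const] using hU.wave

lemma multiplier_identity (hU : IsWave U) {m : SpaceTime n → V} (hm : DifferentiableAt ℝ m p) :
    ∂ₜ (fun q => ⟪∂ₜ U q, m q⟫) p - ∑ i, ∂ₓ i (fun q => ⟪∂ₓ i U q, m q⟫) p =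
      ⟪∂ₜ U p, ∂ₜ m p⟫ - ∑ i, ⟪∂ₓ i U p, ∂ₓ i m p⟫ := by
  simp only [dirDeriv_inner (hU.differentiableAt_dirDeriv _) hm, hU.wave p, sum_inner,
    Finset.sum_add_distrib]
  ring

/-- `multiplier_identity` with the multiplier `2χ ∂ₜU`. -/
lemma localized_energy_identity (hU : IsWave U) {χ : SpaceTime n → ℝ}
    (hχ : DifferentiableAt ℝ χ p) :
    ∂ₜ (fun q => χ q * energyDensity U q) p
        - ∑ i, ∂ₓ i (fun q => ⟪∂ₓ i U q, (2 * χ q) • ∂ₜ U q⟫) p =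
      ∂ₜ χ p * energyDensity U p - 2 * ∑ i, ∂ₓ i χ p * ⟪∂ₓ i U p, ∂ₜ U p⟫ := by
  have hUt := hU.differentiableAt_dirDeriv (p := p) (1, 0)
  have hχ₂ : DifferentiableAt ℝ (fun q => 2 * χ q) p := hχ.const_mul 2
  have hL : DifferentiableAt ℝ (lagrangianDensity U) p :=
    hU.contDiff_lagrangianDensity.differentiable one_ne_zero p
  have hdχ (v : SpaceTime n) : dirDeriv v (fun q => 2 * χ q) p = 2 * dirDeriv v χ p := by
    simp [dirDeriv, fderiv_const_mul hχ]
  have hsplit : ∂ₜ (fun q => ⟪∂ₜ U q, (2 * χ q) • ∂ₜ U q⟫) p =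
      ∂ₜ (fun q => χ q * energyDensity U q) p
        + (χ p * ∂ₜ (lagrangianDensity U) p + ∂ₜ χ p * lagrangianDensity U p) := by
    rw [← dirDeriv_mul hχ hL,
      ← dirDeriv_add (hχ.fun_mul (hU.contDiff_energyDensity.differentiable one_ne_zero p))
        (hχ.fun_mul hL)]
    congr 1
    ext q
    simp only [inner_smul_right, real_inner_self_eq_norm_sq, energyDensity, lagrangianDensity]
    ring
  have hmult := hU.multiplier_identity (hχ₂.fun_smul hUt)
  rw [hsplit, hU.dirDeriv_lagrangianDensity] at hmult
  have hrhs : ⟪∂ₜ U p, ∂ₜ (fun q => (2 * χ q) • ∂ₜ U q) p⟫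
      - ∑ i, ⟪∂ₓ i U p, ∂ₓ i (fun q => (2 * χ q) • ∂ₜ U q) p⟫ =
      χ p * (2 * (⟪∂ₜ U p, ∂ₜ (∂ₜ U) p⟫ - ∑ i, ⟪∂ₓ i U p, ∂ₜ (∂ₓ i U) p⟫))
        + 2 * ∂ₜ χ p * ‖∂ₜ U p‖ ^ 2 - 2 * ∑ i, ∂ₓ i χ p * ⟪∂ₓ i U p, ∂ₜ U p⟫ := by
    simp only [dirDeriv_smul hχ₂ hUt, hdχ, inner_add_right, inner_smul_right,
      real_inner_self_eq_norm_sq, Finset.sum_add_distrib, mul_assoc, ← Finset.mul_sum,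
      dirDeriv_comm hU.contDiff (0, _) (1, 0)]
    ring
  have hEL : energyDensity U p + lagrangianDensity U p = 2 * ‖∂ₜ U p‖ ^ 2 := by
    unfold energyDensity lagrangianDensity
    ring
  linear_combination hmult + hrhs - ∂ₜ χ p * hEL

end IsWave

lemma energy_flux_le (U : SpaceTime n → V) (p : SpaceTime n) {a : ℝ} {b : Fin n → ℝ} (ha : 0 ≤ a)
    (hb : ∑ i, b i ^ 2 ≤ a ^ 2) :
    |2 * ∑ i, b i * ⟪∂ₓ i U p, ∂ₜ U p⟫| ≤ a * energyDensity U p := by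
  set N := ∑ i, ‖∂ₓ i U p‖ ^ 2 with hN
  have hcs : |∑ i, b i * ⟪∂ₓ i U p, ∂ₜ U p⟫| ≤ a * √N * ‖∂ₜ U p‖ :=
    calc |∑ i, b i * ⟪∂ₓ i U p, ∂ₜ U p⟫|
        ≤ ∑ i, |b i| * (‖∂ₓ i U p‖ * ‖∂ₜ U p‖) := by
          refine (Finset.abs_sum_le_sum_abs _ _).trans (Finset.sum_le_sum fun i _ => ?_)
          rw [abs_mul]
          gcongr
          exact abs_real_inner_le_norm _ _
      _ = (∑ i, |b i| * ‖∂ₓ i U p‖) * ‖∂ₜ U p‖ := by simp only [Finset.sum_mul, mul_assoc]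
      _ ≤ √(∑ i, |b i| ^ 2) * √N * ‖∂ₜ U p‖ := by
          gcongr
          exact Real.sum_mul_le_sqrt_mul_sqrt _ _ _
      _ ≤ a * √N * ‖∂ₜ U p‖ := by
          gcongr
          simpa only [sq_abs] using Real.sqrt_le_iff.2 ⟨ha, hb⟩
  have hNsq : √N ^ 2 = N := Real.sq_sqrt (Finset.sum_nonneg fun _ _ => sq_nonneg _)
  rw [abs_mul, abs_two, energyDensity, ← hN, ← hNsq]
  nlinarith [mul_nonneg ha (sq_nonneg (√N - ‖∂ₜ U p‖))]

end WaveEquation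

section Cutoff

/-- A smooth nonincreasing cutoff, equal to `1` on `(-∞, 1]` and to `0` on `[2, ∞)`. -/
def cutoff (a : ℝ) : ℝ := Real.smoothTransition (2 - a)

lemma contDiff_cutoff {k : ℕ∞} : ContDiff ℝ k cutoff :=
  Real.smoothTransition.contDiff.comp (contDiff_const.sub contDiff_id)

lemma cutoff_eq_one {a : ℝ} (h : a ≤ 1) : cutoff a = 1 :=
  Real.smoothTransition.one_of_one_le (by linarith)

lemma cutoff_eq_zero {a : ℝ} (h : 2 ≤ a) : cutoff a = 0 :=
  Real.smoothTransition.zero_of_nonpos (by linarith)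

lemma cutoff_nonneg (a : ℝ) : 0 ≤ cutoff a := Real.smoothTransition.nonneg _

lemma cutoff_le_one (a : ℝ) : cutoff a ≤ 1 := Real.smoothTransition.le_one _

lemma hasDerivAt_cutoff (a : ℝ) : HasDerivAt cutoff (deriv cutoff a) a :=
  ((contDiff_cutoff (k := 1)).differentiable one_ne_zero a).hasDerivAt

lemma deriv_cutoff_nonpos (a : ℝ) : deriv cutoff a ≤ 0 :=
  Antitone.deriv_nonpos fun _ _ h => Real.smoothTransition.monotone (by linarith)

end Cutoff

section EnergyInequality

variable {n : ℕ} {V : Type*} [NormedAddCommGroup V] [InnerProductSpace ℝ V]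
  {U : SpaceTime n → V}

lemma lintegral_le_of_forall_closedBall {X : Type*} [PseudoMetricSpace X] [MeasurableSpace X]
    [OpensMeasurableSpace X] {μ : Measure X} {f : X → ℝ≥0∞} (hf : AEMeasurable f μ) (x₀ : X)
    {C : ℝ≥0∞} (h : ∀ R > 0, ∫⁻ x in Metric.closedBall x₀ R, f x ∂μ ≤ C) :
    ∫⁻ x, f x ∂μ ≤ C :=
  le_of_tendsto
    ((aecover_closedBall (x := x₀) tendsto_id).lintegral_tendsto_of_countably_generated hf)
    ((eventually_gt_atTop 0).mono h)

/-- A cutoff that moves inwards at speed one, to the future for `σ = 1` and to the past for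
`σ = -1`; it lives on `|x| + σ t ≲ R`. The smooth `√(1 + |x|²)` replaces `|x|`. -/
def coneCutoff (σ R : ℝ) (p : SpaceTime n) : ℝ := cutoff (√(1 + ‖p.2‖ ^ 2) + σ * p.1 - R)

lemma contDiff_coneCutoff (σ R : ℝ) : ContDiff ℝ 1 (coneCutoff σ R : SpaceTime n → ℝ) := by
  refine contDiff_cutoff.comp (((contDiff_const.add (contDiff_snd.norm_sq ℝ)).sqrt ?_).add
    (contDiff_const.mul contDiff_fst) |>.sub contDiff_const)
  intro p
  positivity

lemma dirDeriv_coneCutoff (σ R : ℝ) (v p : SpaceTime n) :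
    dirDeriv v (coneCutoff σ R) p = deriv cutoff (√(1 + ‖p.2‖ ^ 2) + σ * p.1 - R) *
      (⟪p.2, v.2⟫ / √(1 + ‖p.2‖ ^ 2) + σ * v.1) := by
  have hsqrt := ((((hasFDerivAt_snd (𝕜 := ℝ) (p := p)).norm_sq).const_add 1).sqrt
    (by positivity))
  have hphase := (hsqrt.add ((hasFDerivAt_fst (𝕜 := ℝ) (p := p)).const_mul σ)).sub_const R
  have := ((hasDerivAt_cutoff _).comp_hasFDerivAt p hphase).fderiv
  refine (congrArg (· v) this).trans ?_
  simp
  field_simp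

lemma coneCutoff_eq_zero {σ R : ℝ} {p : SpaceTime n} (ht : 0 ≤ σ * p.1) (hx : R + 2 ≤ ‖p.2‖) :
    coneCutoff σ R p = 0 := by
  have : ‖p.2‖ ≤ √(1 + ‖p.2‖ ^ 2) := Real.le_sqrt_of_sq_le (by linarith)
  exact cutoff_eq_zero (by linarith)

lemma coneCutoff_eq_one {σ R : ℝ} {p : SpaceTime n} (h : ‖p.2‖ + σ * p.1 ≤ R) :
    coneCutoff σ R p = 1 := by
  have : √(1 + ‖p.2‖ ^ 2) ≤ 1 + ‖p.2‖ :=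
    Real.sqrt_le_iff.2 ⟨by positivity, by nlinarith [norm_nonneg p.2]⟩
  exact cutoff_eq_one (by linarith)

lemma mul_dirDeriv_time_coneCutoff {σ : ℝ} (hσ : σ ^ 2 = 1) (R : ℝ) (p : SpaceTime n) :
    σ * ∂ₜ (coneCutoff σ R) p = deriv cutoff (√(1 + ‖p.2‖ ^ 2) + σ * p.1 - R) := by
  rw [dirDeriv_coneCutoff]
  simp only [inner_zero_right, zero_div, zero_add, mul_one]
  linear_combination deriv cutoff (√(1 + ‖p.2‖ ^ 2) + σ * p.1 - R) * hσ

lemma sum_sq_dirDeriv_space_coneCutoff_le {σ : ℝ} (hσ : σ ^ 2 = 1) (R : ℝ) (p : SpaceTime n) :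
    ∑ i, (∂ₓ i (coneCutoff σ R) p) ^ 2 ≤ (σ * ∂ₜ (coneCutoff σ R) p) ^ 2 := by
  rw [mul_dirDeriv_time_coneCutoff hσ]
  set c := deriv cutoff (√(1 + ‖p.2‖ ^ 2) + σ * p.1 - R)
  have hpos : (0 : ℝ) < 1 + ‖p.2‖ ^ 2 := by positivity
  calc ∑ i, (∂ₓ i (coneCutoff σ R) p) ^ 2
      = c ^ 2 * (‖p.2‖ ^ 2 / (1 + ‖p.2‖ ^ 2)) := by
        simp only [dirDeriv_coneCutoff, inner_unitVec, mul_zero, add_zero, mul_pow, div_pow,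
          Real.sq_sqrt hpos.le, ← Finset.mul_sum, ← Finset.sum_div,
          ← EuclideanSpace.real_norm_sq_eq, c]
    _ ≤ c ^ 2 := mul_le_of_le_one_right (sq_nonneg c) ((div_le_one hpos).2 (by linarith))

/-- The cutoff moves at the speed of light, so energy can only leave its support. -/
lemma IsWave.mul_localized_energy_sub_le (hU : IsWave U) {σ : ℝ} (hσ : σ ^ 2 = 1) (R : ℝ)
    {a b : ℝ} (hab : a < b) (ht : ∀ t ∈ Icc a b, 0 ≤ σ * t) :
    σ * ((∫ x, coneCutoff σ R (b, x) * energyDensity U (b, x))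
      - ∫ x, coneCutoff σ R (a, x) * energyDensity U (a, x)) ≤ 0 := by
  have hχ := contDiff_coneCutoff (n := n) σ R
  have hχ₀ (t : ℝ) (h : t ∈ Icc a b) (x : Eucl n) (hx : R + 2 ≤ ‖x‖) :
      coneCutoff σ R (t, x) = 0 := coneCutoff_eq_zero (ht t h) hx
  rw [← integral_slab_div (P := fun q => coneCutoff σ R q * energyDensity U q)
      (Q := fun i q => ⟪∂ₓ i U q, (2 * coneCutoff σ R q) • ∂ₜ U q⟫) (ρ := R + 2)
      (hχ.mul hU.contDiff_energyDensity)
      (fun i => (hU.contDiff_dirDeriv _).inner ℝ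
        ((contDiff_const.mul hχ).smul (hU.contDiff_dirDeriv _))) hab
      (fun t h x hx => by simp [hχ₀ t h x hx]) (fun i t h x hx => by simp [hχ₀ t h x hx]),
    ← integral_const_mul]
  refine integral_nonpos fun p => ?_
  set d := ∂ₜ (coneCutoff σ R) p
  have hd : σ * d ≤ 0 :=
    (mul_dirDeriv_time_coneCutoff hσ R p).trans_le (deriv_cutoff_nonpos _)
  have hflux := energy_flux_le U p (a := -(σ * d)) (by linarith)
    (by simpa using sum_sq_dirDeriv_space_coneCutoff_le hσ R p)
  have hσ' : |σ| = 1 := by rw [← Real.sqrt_sq_eq_abs, hσ, Real.sqrt_one]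
  have habs := neg_abs_le (σ * (2 * ∑ i, ∂ₓ i (coneCutoff σ R) p * ⟪∂ₓ i U p, ∂ₜ U p⟫))
  rw [abs_mul, hσ', one_mul] at habs
  simp only [Pi.zero_apply, hU.localized_energy_identity (hχ.differentiable one_ne_zero p)]
  linarith

lemma IsWave.localized_energy_le (hU : IsWave U) (R T : ℝ) :
    ∃ χ : SpaceTime n → ℝ, Continuous χ ∧ (∀ p, 0 ≤ χ p) ∧ (∀ p, χ p ≤ 1) ∧
      (∀ x, ‖x‖ ≤ R → χ (T, x) = 1) ∧ (∃ ρ, ∀ x, ρ ≤ ‖x‖ → χ (0, x) = 0 ∧ χ (T, x) = 0) ∧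
      ∫ x, χ (T, x) * energyDensity U (T, x) ≤ ∫ x, χ (0, x) * energyDensity U (0, x) := by
  obtain ⟨σ, hσ, hσT⟩ : ∃ σ : ℝ, σ ^ 2 = 1 ∧ σ * T = |T| := by
    rcases le_total 0 T with h | h
    · exact ⟨1, by simp [abs_of_nonneg h]⟩
    · exact ⟨-1, by simp [abs_of_nonpos h]⟩
  refine ⟨coneCutoff σ (R + |T|), (contDiff_coneCutoff _ _).continuous, fun p => cutoff_nonneg _,
    fun p => cutoff_le_one _, fun x hx => coneCutoff_eq_one (by simpa [hσT] using hx),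
    ⟨R + |T| + 2, fun x hx => ⟨coneCutoff_eq_zero (by simp) hx,
      coneCutoff_eq_zero (by simp [hσT]) hx⟩⟩, ?_⟩
  rcases lt_trichotomy T 0 with hT | rfl | hT
  · have hσ₁ : σ = -1 := by rw [abs_of_neg hT] at hσT; nlinarith
    subst hσ₁
    have := hU.mul_localized_energy_sub_le hσ (R + |T|) hT fun t ht => by linarith [ht.2]
    linarith
  · exact le_rfl
  · have hσ₁ : σ = 1 := by rw [abs_of_pos hT] at hσT; nlinarith
    subst hσ₁
    have := hU.mul_localized_energy_sub_le hσ (R + |T|) hT fun t ht => by linarith [ht.1]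
    linarith

/-- The total energy of `U` at time `t`. -/
def energy (U : SpaceTime n → V) (t : ℝ) : ℝ≥0∞ :=
  ∫⁻ x, ENNReal.ofReal (energyDensity U (t, x))

theorem IsWave.energy_le (hU : IsWave U) (T : ℝ) : energy U T ≤ energy U 0 := by
  have hc (t : ℝ) : Continuous fun x => energyDensity U (t, x) :=
    (contDiff_slice hU.contDiff_energyDensity t).continuous
  refine lintegral_le_of_forall_closedBall (hc T).measurable.ennreal_ofReal.aemeasurable 0
    fun R _ => ?_
  obtain ⟨χ, hχ, hχ₀, hχ₁, hχR, ⟨ρ, hρ⟩, hle⟩ := hU.localized_energy_le R T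
  have hχc (t : ℝ) : Continuous fun x => χ (t, x) := hχ.comp (by fun_prop)
  have hint {t : ℝ} (ht : ∀ x, ρ ≤ ‖x‖ → χ (t, x) = 0) :
      ENNReal.ofReal (∫ x, χ (t, x) * energyDensity U (t, x)) =
        ∫⁻ x, ENNReal.ofReal (χ (t, x) * energyDensity U (t, x)) :=
    ofReal_integral_eq_lintegral_ofReal
      (((hχc t).mul (hc t)).integrable_of_hasCompactSupport
        (hasCompactSupport_of_norm_le ht).mul_right)
      (ae_of_all _ fun x => mul_nonneg (hχ₀ _) (energyDensity_nonneg U _))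
  calc ∫⁻ x in Metric.closedBall 0 R, ENNReal.ofReal (energyDensity U (T, x))
      = ∫⁻ x in Metric.closedBall 0 R, ENNReal.ofReal (χ (T, x) * energyDensity U (T, x)) :=
        setLIntegral_congr_fun measurableSet_closedBall fun x hx => by
          simp [hχR x (mem_closedBall_zero_iff.1 hx)]
    _ ≤ ∫⁻ x, ENNReal.ofReal (χ (T, x) * energyDensity U (T, x)) := setLIntegral_le_lintegral _ _
    _ ≤ ∫⁻ x, ENNReal.ofReal (χ (0, x) * energyDensity U (0, x)) := by
        rw [← hint fun x hx => (hρ x hx).2, ← hint fun x hx => (hρ x hx).1]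
        exact ENNReal.ofReal_le_ofReal hle
    _ ≤ energy U 0 := lintegral_mono fun x => ENNReal.ofReal_le_ofReal
        (mul_le_of_le_one_left (energyDensity_nonneg U _) (hχ₁ _))

end EnergyInequality

section RadialDerivative

variable {n : ℕ} {k k' l l' : Eucl n → ℝ} {p : SpaceTime n}

/-- `∇k(x) = k'(x) x` for all `x`. For radial `k` this means `k' = r⁻¹ ∂ᵣk`; in contrast to `∂ᵣk`,
the function `k'` is smooth at the origin whenever `k` is. -/
def HasRadialDeriv (k k' : Eucl n → ℝ) : Prop := ∀ x, HasFDerivAt k (k' x • innerSL ℝ x) x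

lemma hasRadialDeriv_norm_sq : HasRadialDeriv (fun x : Eucl n => ‖x‖ ^ 2) fun _ => 2 :=
  fun x => by simpa [ofNat_smul_eq_nsmul] using (hasFDerivAt_id (𝕜 := ℝ) x).norm_sq

namespace HasRadialDeriv

lemma comp {g : ℝ → ℝ} {g' : Eucl n → ℝ} (hk : HasRadialDeriv k k')
    (hg : ∀ x, HasDerivAt g (g' x) (k x)) :
    HasRadialDeriv (fun x => g (k x)) fun x => g' x * k' x := fun x => by
  simpa [mul_smul, Function.comp_def] using! (hg x).comp_hasFDerivAt x (hk x)

lemma add (hk : HasRadialDeriv k k') (hl : HasRadialDeriv l l') :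
    HasRadialDeriv (fun x => k x + l x) fun x => k' x + l' x := fun x => by
  simpa [add_smul] using! (hk x).add (hl x)

lemma mul (hk : HasRadialDeriv k k') (hl : HasRadialDeriv l l') :
    HasRadialDeriv (fun x => k x * l x) fun x => k' x * l x + k x * l' x := fun x => by
  refine ((hk x).mul (hl x)).congr_fderiv ?_
  ext v
  simp only [add_apply, smul_apply, innerSL_apply_apply, smul_eq_mul]
  ring

lemma const_mul (c : ℝ) (hk : HasRadialDeriv k k') :
    HasRadialDeriv (fun x => c * k x) fun x => c * k' x := fun x => by
  simpa [mul_smul] using (hk x).const_mul c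

lemma dirDeriv_eq (hk : HasRadialDeriv k k') (v x : Eucl n) :
    dirDeriv v k x = k' x * ⟪x, v⟫ := by
  simp [dirDeriv, (hk x).fderiv]

lemma differentiableAt_space (hk : HasRadialDeriv k k') :
    DifferentiableAt ℝ (fun q : SpaceTime n => k q.2) p :=
  (hk p.2).differentiableAt.comp p differentiableAt_snd

lemma dirDeriv_space_eq (hk : HasRadialDeriv k k') (v : SpaceTime n) :
    dirDeriv v (fun q => k q.2) p = k' p.2 * ⟪p.2, v.2⟫ := by
  have := (HasFDerivAt.comp (g := k) p (hk p.2) (hasFDerivAt_snd (𝕜 := ℝ) (p := p))).fderiv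
  simpa [dirDeriv, Function.comp_def] using congrArg (· v) this

end HasRadialDeriv

end RadialDerivative

section MorawetzIdentity

variable {n : ℕ} {V : Type*} [NormedAddCommGroup V] [InnerProductSpace ℝ V]
  {U : SpaceTime n → V} {p : SpaceTime n}

/-- The spatial scaling derivative `x · ∇U = r ∂ᵣU`. -/
def scalingDeriv (U : SpaceTime n → V) (p : SpaceTime n) : V := dirDeriv (0, p.2) U p

/-- The multiplier `m = K x·∇U + F U` of the Morawetz identity. -/
def morawetzMultiplier (K F : Eucl n → ℝ) (U : SpaceTime n → V) (p : SpaceTime n) : V :=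
  K p.2 • scalingDeriv U p + F p.2 • U p

/-- The density `φ = (K (|∂ₜU|² - |∇U|²) - F' |U|²) / 2` for which `⟨∇U, m⟩ + x φ` is the flux of
the Morawetz identity. -/
def morawetzFlux (K F' : Eucl n → ℝ) (U : SpaceTime n → V) (p : SpaceTime n) : ℝ :=
  (K p.2 * lagrangianDensity U p - F' p.2 * ‖U p‖ ^ 2) / 2

lemma scalingDeriv_eq_sum (U : SpaceTime n → V) (p : SpaceTime n) :
    scalingDeriv U p = ∑ i, p.2 i • ∂ₓ i U p := by
  have h : ((0 : ℝ), p.2) = ∑ i, p.2 i • ((0 : ℝ), unitVec i) := by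
    ext1 <;> simp [Prod.fst_sum, Prod.snd_sum, sum_apply_smul_unitVec]
  rw [scalingDeriv, dirDeriv, h, map_sum]
  simp only [map_smul, dirDeriv]

lemma norm_sq_scalingDeriv_le (hU : DifferentiableAt ℝ U p) :
    ‖scalingDeriv U p‖ ^ 2 ≤ ‖p.2‖ ^ 2 * ∑ i, ‖∂ₓ i U p‖ ^ 2 := by
  rw [scalingDeriv, ← dirDeriv_slice hU, ← gradNormSq_slice hU]
  exact norm_sq_dirDeriv_le _ _ _

namespace IsWave

lemma contDiff_scalingDeriv (hU : IsWave U) : ContDiff ℝ 1 (scalingDeriv U) :=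
  (hU.contDiff.fderiv_right (m := 1) (by norm_num)).clm_apply
    (contDiff_const.prodMk contDiff_snd)

lemma dirDeriv_scalingDeriv (hU : IsWave U) (v : SpaceTime n) :
    dirDeriv v (scalingDeriv U) p = dirDeriv (0, v.2) U p + dirDeriv (0, p.2) (dirDeriv v U) p := by
  have hd : DifferentiableAt ℝ (fderiv ℝ U) p :=
    (hU.contDiff.fderiv_right (m := 1) (by norm_num)).differentiable one_ne_zero p
  have hx : HasFDerivAt (fun q : SpaceTime n => ((0 : ℝ), q.2))
      ((0 : SpaceTime n →L[ℝ] ℝ).prod (ContinuousLinearMap.snd ℝ ℝ (Eucl n))) p :=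
    (hasFDerivAt_const 0 p).prodMk hasFDerivAt_snd
  have hsymm : fderiv ℝ (fderiv ℝ U) p v (0, p.2) = fderiv ℝ (fderiv ℝ U) p (0, p.2) v :=
    (hU.contDiff.contDiffAt.isSymmSndFDerivAt (by simp)).eq _ _
  have h₁ := (hd.hasFDerivAt.clm_apply hx).fderiv
  have h₂ := (hd.hasFDerivAt.clm_apply (hasFDerivAt_const v p)).fderiv
  calc dirDeriv v (scalingDeriv U) p
      = fderiv ℝ U p (0, v.2) + fderiv ℝ (fderiv ℝ U) p v (0, p.2) := by
        simpa using! congrArg (· v) h₁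
    _ = fderiv ℝ U p (0, v.2) + fderiv ℝ (fderiv ℝ U) p (0, p.2) v := by rw [hsymm]
    _ = _ := by simpa [dirDeriv] using! (congrArg (· (0, p.2)) h₂).symm

variable {K K' F F' F'' : Eucl n → ℝ}

lemma dirDeriv_morawetzMultiplier (hU : IsWave U) (hK : HasRadialDeriv K K')
    (hF : HasRadialDeriv F F') (v : SpaceTime n) :
    dirDeriv v (morawetzMultiplier K F U) p =
      K p.2 • (dirDeriv (0, v.2) U p + dirDeriv (0, p.2) (dirDeriv v U) p)
        + (K' p.2 * ⟪p.2, v.2⟫) • scalingDeriv U p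
        + (F p.2 • dirDeriv v U p + (F' p.2 * ⟪p.2, v.2⟫) • U p) := by
  have hA : DifferentiableAt ℝ (scalingDeriv U) p :=
    hU.contDiff_scalingDeriv.differentiable one_ne_zero p
  have hK₀ := hK.differentiableAt_space (p := p)
  have hF₀ := hF.differentiableAt_space (p := p)
  change dirDeriv v (fun q => K q.2 • scalingDeriv U q + F q.2 • U q) p = _
  rw [dirDeriv_add (hK₀.fun_smul hA) (hF₀.fun_smul hU.differentiableAt),
    dirDeriv_smul hK₀ hA, dirDeriv_smul hF₀ hU.differentiableAt, hU.dirDeriv_scalingDeriv,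
    hK.dirDeriv_space_eq, hF.dirDeriv_space_eq]

lemma multiplier_term_eq (hU : IsWave U) (hK : HasRadialDeriv K K') (hF : HasRadialDeriv F F') :
    ⟪∂ₜ U p, ∂ₜ (morawetzMultiplier K F U) p⟫
        - ∑ i, ⟪∂ₓ i U p, ∂ₓ i (morawetzMultiplier K F U) p⟫ =
      K p.2 * (dirDeriv (0, p.2) (lagrangianDensity U) p / 2) - K p.2 * ∑ i, ‖∂ₓ i U p‖ ^ 2
        - K' p.2 * ‖scalingDeriv U p‖ ^ 2 + F p.2 * lagrangianDensity U p
        - F' p.2 * ⟪scalingDeriv U p, U p⟫ := by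
  have hzero : dirDeriv ((0 : ℝ), (0 : Eucl n)) U p = 0 := map_zero _
  have htime : ⟪∂ₜ U p, ∂ₜ (morawetzMultiplier K F U) p⟫ =
      K p.2 * ⟪∂ₜ U p, dirDeriv (0, p.2) (∂ₜ U) p⟫ + F p.2 * ‖∂ₜ U p‖ ^ 2 := by
    rw [hU.dirDeriv_morawetzMultiplier hK hF]
    simp [hzero, inner_add_right, inner_smul_right]
  have hspace (i : Fin n) : ⟪∂ₓ i U p, ∂ₓ i (morawetzMultiplier K F U) p⟫ =
      K p.2 * ‖∂ₓ i U p‖ ^ 2 + K p.2 * ⟪∂ₓ i U p, dirDeriv (0, p.2) (∂ₓ i U) p⟫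
        + K' p.2 * ⟪p.2 i • ∂ₓ i U p, scalingDeriv U p⟫ + F p.2 * ‖∂ₓ i U p‖ ^ 2
        + F' p.2 * ⟪p.2 i • ∂ₓ i U p, U p⟫ := by
    rw [hU.dirDeriv_morawetzMultiplier hK hF]
    simp only [inner_unitVec, inner_add_right, inner_smul_right, real_inner_smul_left,
      real_inner_self_eq_norm_sq]
    ring
  have hsum (w : V) : ∑ i, ⟪p.2 i • ∂ₓ i U p, w⟫ = ⟪scalingDeriv U p, w⟫ := by
    rw [scalingDeriv_eq_sum, sum_inner]
  rw [htime, hU.dirDeriv_lagrangianDensity, lagrangianDensity]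
  simp only [hspace, Finset.sum_add_distrib, ← Finset.mul_sum, hsum, real_inner_self_eq_norm_sq]
  ring

lemma dirDeriv_morawetzFlux (hU : IsWave U) (hK : HasRadialDeriv K K')
    (hF' : HasRadialDeriv F' F'') :
    dirDeriv (0, p.2) (morawetzFlux K F' U) p =
      (K p.2 * dirDeriv (0, p.2) (lagrangianDensity U) p
        + K' p.2 * ‖p.2‖ ^ 2 * lagrangianDensity U p
        - F'' p.2 * ‖p.2‖ ^ 2 * ‖U p‖ ^ 2) / 2 - F' p.2 * ⟪scalingDeriv U p, U p⟫ := by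
  have hL : DifferentiableAt ℝ (lagrangianDensity U) p :=
    hU.contDiff_lagrangianDensity.differentiable one_ne_zero p
  have hsq : DifferentiableAt ℝ (fun q => ‖U q‖ ^ 2) p := hU.differentiableAt.norm_sq ℝ
  have hK₀ := hK.differentiableAt_space (p := p)
  have hF₀ := hF'.differentiableAt_space (p := p)
  have h := ((hK₀.hasFDerivAt.mul hL.hasFDerivAt).sub
    (hF₀.hasFDerivAt.mul hsq.hasFDerivAt)).mul_const (2⁻¹ : ℝ)
  have h₁ := hK.dirDeriv_space_eq (p := p) (0, p.2)
  have h₂ := hF'.dirDeriv_space_eq (p := p) (0, p.2)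
  have h₃ := dirDeriv_norm_sq hU.differentiableAt (p := p) (0, p.2)
  have h₄ : dirDeriv (0, p.2) (morawetzFlux K F' U) p = _ := congrArg (· (0, p.2)) h.fderiv
  rw [h₄]
  simp only [dirDeriv, real_inner_self_eq_norm_sq] at h₁ h₂ h₃
  simp [h₁, h₂, h₃, scalingDeriv, dirDeriv, real_inner_comm (U p)]
  ring

/-- The flux terms complete `K` times the derivative of the Lagrangian density and
`F' ⟨x·∇U, U⟩` to divergences. -/
theorem morawetz_identity (hU : IsWave U) (hK : HasRadialDeriv K K') (hF : HasRadialDeriv F F')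
    (hF' : HasRadialDeriv F' F'') :
    ∂ₜ (fun q => ⟪∂ₜ U q, morawetzMultiplier K F U q⟫) p
        - ∑ i, ∂ₓ i (fun q => ⟪∂ₓ i U q, morawetzMultiplier K F U q⟫
          + q.2 i * morawetzFlux K F' U q) p =
      -(K p.2 * ∑ i, ‖∂ₓ i U p‖ ^ 2) - K' p.2 * ‖scalingDeriv U p‖ ^ 2
        + (F p.2 - (n * K p.2 + ‖p.2‖ ^ 2 * K' p.2) / 2) * lagrangianDensity U p
        + (n * F' p.2 + ‖p.2‖ ^ 2 * F'' p.2) / 2 * ‖U p‖ ^ 2 := by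
  have hm : DifferentiableAt ℝ (morawetzMultiplier K F U) p :=
    (hK.differentiableAt_space.fun_smul
      (hU.contDiff_scalingDeriv.differentiable one_ne_zero p)).add
      (hF.differentiableAt_space.fun_smul hU.differentiableAt)
  have hφ : DifferentiableAt ℝ (morawetzFlux K F' U) p :=
    ((hK.differentiableAt_space.mul
      (hU.contDiff_lagrangianDensity.differentiable one_ne_zero p)).sub
      (hF'.differentiableAt_space.mul (hU.differentiableAt.norm_sq ℝ))).mul_const _
  simp only [fun i => dirDeriv_add ((hU.differentiableAt_dirDeriv (p := p) (0, unitVec i)).inner ℝ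
      hm) (by fun_prop : DifferentiableAt ℝ (fun q => q.2 i * morawetzFlux K F' U q) p),
    Finset.sum_add_distrib, div_space_coord_mul hφ, ← sub_sub, hU.multiplier_identity hm,
    hU.multiplier_term_eq hK hF, hU.dirDeriv_morawetzFlux hK hF']
  rw [morawetzFlux]
  ring

end IsWave

end MorawetzIdentity

section RadialWeights

variable {n : ℕ} {ε : ℝ}

/-- `√(ε² + |x|²)`, a substitute for `|x|` that is smooth at the origin. -/
def smoothNorm (ε : ℝ) (x : Eucl n) : ℝ := √(ε ^ 2 + ‖x‖ ^ 2)

lemma smoothNorm_sq (ε : ℝ) (x : Eucl n) : smoothNorm ε x ^ 2 = ε ^ 2 + ‖x‖ ^ 2 :=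
  Real.sq_sqrt (by positivity)

lemma smoothNorm_pos (hε : 0 < ε) (x : Eucl n) : 0 < smoothNorm ε x :=
  Real.sqrt_pos.2 (by positivity)

lemma norm_le_smoothNorm (ε : ℝ) (x : Eucl n) : ‖x‖ ≤ smoothNorm ε x :=
  Real.le_sqrt_of_sq_le (by linarith [sq_nonneg ε])

lemma smoothNorm_le (hε : 0 < ε) (x : Eucl n) : smoothNorm ε x ≤ ε + ‖x‖ :=
  Real.sqrt_le_iff.2 ⟨by positivity, by nlinarith [norm_nonneg x]⟩

lemma norm_sq_mul_inv_smoothNorm_sq_le (hε : 0 < ε) (x : Eucl n) :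
    ‖x‖ ^ 2 * (smoothNorm ε x)⁻¹ ^ 2 ≤ 1 := by
  have := smoothNorm_pos hε x
  rw [inv_pow, ← div_eq_mul_inv, div_le_one (by positivity)]
  exact pow_le_pow_left₀ (norm_nonneg x) (norm_le_smoothNorm ε x) 2

lemma contDiff_smoothNorm (hε : 0 < ε) {k : WithTop ℕ∞} :
    ContDiff ℝ k (smoothNorm ε : Eucl n → ℝ) :=
  (contDiff_const.add (contDiff_norm_sq ℝ)).sqrt fun _ => by positivity

lemma contDiff_inv_smoothNorm (hε : 0 < ε) {k : WithTop ℕ∞} :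
    ContDiff ℝ k fun x : Eucl n => (smoothNorm ε x)⁻¹ :=
  (contDiff_smoothNorm hε).inv fun x => (smoothNorm_pos hε x).ne'

lemma hasRadialDeriv_smoothNorm (hε : 0 < ε) :
    HasRadialDeriv (n := n) (smoothNorm ε) fun x => (smoothNorm ε x)⁻¹ := by
  have h : HasRadialDeriv (n := n) (smoothNorm ε) fun x => 1 / (2 * smoothNorm ε x) * 2 :=
    hasRadialDeriv_norm_sq.comp fun x =>
      ((hasDerivAt_id' (‖x‖ ^ 2)).const_add (ε ^ 2)).sqrt (by positivity)
  refine fun x => (h x).congr_fderiv ?_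
  have := (smoothNorm_pos hε x).ne'
  congr 1
  field_simp

lemma hasRadialDeriv_inv_smoothNorm (hε : 0 < ε) :
    HasRadialDeriv (n := n) (fun x => (smoothNorm ε x)⁻¹) fun x => -(smoothNorm ε x)⁻¹ ^ 3 := by
  have h := (hasRadialDeriv_smoothNorm (n := n) hε).comp fun x =>
    hasDerivAt_inv (smoothNorm_pos hε x).ne'
  refine fun x => (h x).congr_fderiv ?_
  congr 1
  field

/-- The weight `H = (ε + √(ε² + |x|²))⁻¹` of `x·∇u` in the Morawetz multiplier. -/
def gradWeight (ε : ℝ) (x : Eucl n) : ℝ := (ε + smoothNorm ε x)⁻¹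

/-- `H'`, with `∇H(x) = H'(x) x`. -/
def gradWeight' (ε : ℝ) (x : Eucl n) : ℝ := -(gradWeight ε x ^ 2 * (smoothNorm ε x)⁻¹)

/-- The weight `G = (1/√(ε² + |x|²) + (n - 2) H) / 2 = (n H + |x|² H') / 2` of `u` in the Morawetz
multiplier. -/
def zeroWeight (ε : ℝ) (x : Eucl n) : ℝ := ((smoothNorm ε x)⁻¹ + (n - 2) * gradWeight ε x) / 2

/-- `G'`, with `∇G(x) = G'(x) x`. -/
def zeroWeight' (ε : ℝ) (x : Eucl n) : ℝ :=
  (-(smoothNorm ε x)⁻¹ ^ 3 + (n - 2) * gradWeight' ε x) / 2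

/-- `G''`, with `∇G'(x) = G''(x) x`. -/
def zeroWeight'' (ε : ℝ) (x : Eucl n) : ℝ :=
  (3 * (smoothNorm ε x)⁻¹ ^ 5 + (n - 2) * (2 * gradWeight ε x ^ 3 * (smoothNorm ε x)⁻¹ ^ 2
    + gradWeight ε x ^ 2 * (smoothNorm ε x)⁻¹ ^ 3)) / 2

lemma gradWeight_pos (hε : 0 < ε) (x : Eucl n) : 0 < gradWeight ε x :=
  inv_pos.2 (add_pos hε (smoothNorm_pos hε x))

lemma contDiff_gradWeight (hε : 0 < ε) {k : WithTop ℕ∞} :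
    ContDiff ℝ k (gradWeight ε : Eucl n → ℝ) :=
  (contDiff_const.add (contDiff_smoothNorm hε)).inv fun x =>
    (add_pos hε (smoothNorm_pos hε x)).ne'

lemma contDiff_gradWeight' (hε : 0 < ε) {k : WithTop ℕ∞} :
    ContDiff ℝ k (gradWeight' ε : Eucl n → ℝ) :=
  (((contDiff_gradWeight hε).pow 2).mul (contDiff_inv_smoothNorm hε)).neg

lemma contDiff_zeroWeight (hε : 0 < ε) {k : WithTop ℕ∞} :
    ContDiff ℝ k (zeroWeight ε : Eucl n → ℝ) :=
  ((contDiff_inv_smoothNorm hε).add (contDiff_const.mul (contDiff_gradWeight hε))).div_const 2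

lemma contDiff_zeroWeight' (hε : 0 < ε) {k : WithTop ℕ∞} :
    ContDiff ℝ k (zeroWeight' ε : Eucl n → ℝ) :=
  (((contDiff_inv_smoothNorm hε).pow 3).neg.add
    (contDiff_const.mul (contDiff_gradWeight' hε))).div_const 2

lemma hasRadialDeriv_gradWeight (hε : 0 < ε) :
    HasRadialDeriv (n := n) (gradWeight ε) (gradWeight' ε) := by
  have h := (hasRadialDeriv_smoothNorm (n := n) hε).comp fun x =>
    ((hasDerivAt_id' _).const_add ε).inv (add_pos hε (smoothNorm_pos hε x)).ne'
  refine fun x => (h x).congr_fderiv ?_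
  congr 1
  simp only [gradWeight', gradWeight, inv_pow]
  ring

lemma hasRadialDeriv_gradWeight' (hε : 0 < ε) :
    HasRadialDeriv (n := n) (gradWeight' ε) fun x => 2 * gradWeight ε x ^ 3
      * (smoothNorm ε x)⁻¹ ^ 2 + gradWeight ε x ^ 2 * (smoothNorm ε x)⁻¹ ^ 3 := by
  have hH := hasRadialDeriv_gradWeight (n := n) hε
  have h := ((hH.mul hH).mul (hasRadialDeriv_inv_smoothNorm hε)).const_mul (-1)
  have hfun : (fun x : Eucl n => -1 * (gradWeight ε x * gradWeight ε x * (smoothNorm ε x)⁻¹)) =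
      gradWeight' ε := by
    ext x
    rw [gradWeight']
    ring
  rw [hfun] at h
  refine fun x => (h x).congr_fderiv ?_
  congr 1
  simp only [gradWeight']
  ring

lemma hasRadialDeriv_zeroWeight (hε : 0 < ε) :
    HasRadialDeriv (n := n) (zeroWeight ε) (zeroWeight' ε) := by
  have h := ((hasRadialDeriv_inv_smoothNorm (n := n) hε).add
    ((hasRadialDeriv_gradWeight hε).const_mul ((n : ℝ) - 2))).const_mul 2⁻¹
  simpa only [← div_eq_inv_mul] using! h

lemma hasRadialDeriv_zeroWeight' (hε : 0 < ε) :
    HasRadialDeriv (n := n) (zeroWeight' ε) (zeroWeight'' ε) := by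
  have h := ((((hasRadialDeriv_inv_smoothNorm (n := n) hε).comp fun x =>
    (hasDerivAt_pow 3 _).neg).add
      ((hasRadialDeriv_gradWeight' hε).const_mul ((n : ℝ) - 2)))).const_mul 2⁻¹
  simp only [← div_eq_inv_mul] at h
  refine fun x => (h x).congr_fderiv ?_
  congr 1
  rw [zeroWeight'']
  push_cast
  ring

lemma gradWeight_eq (hε : 0 < ε) (x : Eucl n) :
    ‖x‖ ^ 2 * gradWeight ε x = smoothNorm ε x - ε := by
  have h := smoothNorm_sq ε x
  have hS := smoothNorm_pos hε x
  rw [gradWeight]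
  field_simp
  linear_combination -h

lemma zeroWeight_eq (hε : 0 < ε) (x : Eucl n) :
    zeroWeight ε x = (n * gradWeight ε x + ‖x‖ ^ 2 * gradWeight' ε x) / 2 := by
  have hS := smoothNorm_pos hε x
  have h : ‖x‖ ^ 2 * gradWeight' ε x =
      -(‖x‖ ^ 2 * gradWeight ε x * gradWeight ε x * (smoothNorm ε x)⁻¹) := by
    rw [gradWeight']
    ring
  rw [h, gradWeight_eq hε, zeroWeight, gradWeight]
  field

lemma gradWeight_le_inv_smoothNorm (hε : 0 < ε) (x : Eucl n) :
    gradWeight ε x ≤ (smoothNorm ε x)⁻¹ :=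
  inv_anti₀ (smoothNorm_pos hε x) (by linarith)

lemma zeroWeight_nonneg (hn : 2 ≤ n) (hε : 0 < ε) (x : Eucl n) : 0 ≤ zeroWeight ε x := by
  have hn' : (2 : ℝ) ≤ n := mod_cast hn
  have := mul_nonneg (sub_nonneg.2 hn') (gradWeight_pos hε x).le
  have := inv_pos.2 (smoothNorm_pos hε x)
  rw [zeroWeight]
  positivity

lemma zeroWeight_le (hn : 2 ≤ n) (hε : 0 < ε) (x : Eucl n) :
    zeroWeight ε x ≤ n * (smoothNorm ε x)⁻¹ := by
  have hn' : (2 : ℝ) ≤ n := mod_cast hn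
  have := mul_le_mul_of_nonneg_left (gradWeight_le_inv_smoothNorm hε x) (sub_nonneg.2 hn')
  have := inv_pos.2 (smoothNorm_pos hε x)
  rw [zeroWeight]
  nlinarith

lemma abs_zeroWeight'_le (hn : 2 ≤ n) (hε : 0 < ε) (x : Eucl n) :
    |zeroWeight' ε x| ≤ n * (smoothNorm ε x)⁻¹ ^ 3 := by
  have hn' : (2 : ℝ) ≤ n := mod_cast hn
  have hs := inv_pos.2 (smoothNorm_pos hε x)
  have hH := gradWeight_pos hε x
  have hle : gradWeight ε x ^ 2 * (smoothNorm ε x)⁻¹ ≤ (smoothNorm ε x)⁻¹ ^ 3 := by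
    rw [pow_succ _ 2]
    gcongr
    exact gradWeight_le_inv_smoothNorm hε x
  have := mul_le_mul_of_nonneg_left hle (sub_nonneg.2 hn')
  have := mul_nonneg (sub_nonneg.2 hn') (by positivity : 0 ≤ gradWeight ε x ^ 2
    * (smoothNorm ε x)⁻¹)
  have := pow_pos hs 3
  rw [zeroWeight', gradWeight', abs_le]
  constructor <;> nlinarith

/-- The left-hand side is the Laplacian of `zeroWeight ε`. -/
lemma zeroWeight_superharmonic (hn : 3 ≤ n) (hε : 0 < ε) (x : Eucl n) :
    n * zeroWeight' ε x + ‖x‖ ^ 2 * zeroWeight'' ε x ≤ 0 := by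
  have hn' : (3 : ℝ) ≤ n := mod_cast hn
  have hS := smoothNorm_pos hε x
  have hH := gradWeight_pos hε x
  have hr := gradWeight_eq hε x
  have hrS := norm_sq_mul_inv_smoothNorm_sq_le hε x
  set S := smoothNorm ε x with hSdef
  set H := gradWeight ε x
  have hs := inv_pos.2 hS
  have hrH : ‖x‖ ^ 2 * H * S⁻¹ ≤ 1 := by
    rw [hr, ← div_eq_mul_inv, div_le_one hS]
    linarith
  have h₁ : -n * S⁻¹ ^ 3 + 3 * (‖x‖ ^ 2 * S⁻¹ ^ 2) * S⁻¹ ^ 3 ≤ 0 := by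
    have := pow_pos hs 3
    nlinarith
  have h₂ : H ^ 2 * S⁻¹ * (-n + 2 * (‖x‖ ^ 2 * H * S⁻¹) + ‖x‖ ^ 2 * S⁻¹ ^ 2) ≤ 0 :=
    mul_nonpos_of_nonneg_of_nonpos (by positivity) (by linarith)
  have h₃ := mul_nonpos_of_nonneg_of_nonpos (by linarith : (0 : ℝ) ≤ n - 2) h₂
  rw [zeroWeight', zeroWeight'', gradWeight', ← hSdef]
  linarith

end RadialWeights

section BallCutoff

variable {n : ℕ} {R : ℝ} {x : Eucl n}

lemma contDiff_deriv_cutoff {k : ℕ} : ContDiff ℝ k (deriv cutoff) :=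
  ((contDiff_cutoff (k := ((k + 1 : ℕ) : ℕ∞))).of_le (by simp)).iterate_deriv' k 1

lemma deriv_cutoff_eq_zero {a : ℝ} (ha : a ∉ Icc 1 2) : deriv cutoff a = 0 := by
  rw [mem_Icc, not_and_or, not_le, not_le] at ha
  have h : cutoff =ᶠ[𝓝 a] fun _ => cutoff a := by
    rcases ha with ha | ha
    · filter_upwards [Iio_mem_nhds ha] with b hb
      rw [cutoff_eq_one ha.le, cutoff_eq_one (mem_Iio.1 hb).le]
    · filter_upwards [Ioi_mem_nhds ha] with b hb
      rw [cutoff_eq_zero ha.le, cutoff_eq_zero (mem_Ioi.1 hb).le]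
  rw [h.deriv_eq, deriv_const]

lemma deriv_deriv_cutoff_eq_zero {a : ℝ} (ha : a ∉ Icc 1 2) : deriv (deriv cutoff) a = 0 := by
  have h : deriv cutoff =ᶠ[𝓝 a] fun _ => 0 := by
    filter_upwards [isClosed_Icc.isOpen_compl.mem_nhds ha] with b hb using deriv_cutoff_eq_zero hb
  rw [h.deriv_eq, deriv_const]

lemma exists_abs_deriv_cutoff_le :
    ∃ M, ∀ a, |deriv cutoff a| ≤ M ∧ |deriv (deriv cutoff) a| ≤ M := by
  have h₁ := (contDiff_deriv_cutoff (k := 0)).continuous.bounded_above_of_compact_support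
    (.intro isCompact_Icc fun _ => deriv_cutoff_eq_zero)
  have h₂ := ((contDiff_deriv_cutoff (k := 1)).continuous_deriv
    le_rfl).bounded_above_of_compact_support
    (.intro isCompact_Icc fun _ => deriv_deriv_cutoff_eq_zero)
  obtain ⟨M₁, hM₁⟩ := h₁
  obtain ⟨M₂, hM₂⟩ := h₂
  exact ⟨max M₁ M₂, fun a => ⟨(hM₁ a).trans (le_max_left _ _), (hM₂ a).trans (le_max_right _ _)⟩⟩

/-- A bound for the first two derivatives of `cutoff`. -/
def cutoffBound : ℝ := exists_abs_deriv_cutoff_le.choose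

lemma abs_deriv_cutoff_le (a : ℝ) : |deriv cutoff a| ≤ cutoffBound :=
  (exists_abs_deriv_cutoff_le.choose_spec a).1

lemma abs_deriv_deriv_cutoff_le (a : ℝ) : |deriv (deriv cutoff) a| ≤ cutoffBound :=
  (exists_abs_deriv_cutoff_le.choose_spec a).2

lemma cutoffBound_nonneg : 0 ≤ cutoffBound := (abs_nonneg _).trans (abs_deriv_cutoff_le 0)

/-- A smooth cutoff `ζ`, equal to `1` on the ball of radius `R` and to `0` off the ball of radius
`2R`. -/
def ballCutoff (R : ℝ) (x : Eucl n) : ℝ := cutoff (‖x‖ ^ 2 / R ^ 2)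

/-- `ζ'`, with `∇ζ(x) = ζ'(x) x`. -/
def ballCutoff' (R : ℝ) (x : Eucl n) : ℝ := 2 / R ^ 2 * deriv cutoff (‖x‖ ^ 2 / R ^ 2)

/-- `ζ''`, with `∇ζ'(x) = ζ''(x) x`. -/
def ballCutoff'' (R : ℝ) (x : Eucl n) : ℝ := 4 / R ^ 4 * deriv (deriv cutoff) (‖x‖ ^ 2 / R ^ 2)

lemma contDiff_ballCutoff {k : ℕ} : ContDiff ℝ k (ballCutoff R : Eucl n → ℝ) :=
  (contDiff_cutoff (k := k)).comp ((contDiff_norm_sq ℝ).div_const _)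

lemma contDiff_ballCutoff' {k : ℕ} : ContDiff ℝ k (ballCutoff' R : Eucl n → ℝ) :=
  contDiff_const.mul (contDiff_deriv_cutoff.comp ((contDiff_norm_sq ℝ).div_const _))

lemma hasRadialDeriv_norm_sq_div :
    HasRadialDeriv (fun x : Eucl n => ‖x‖ ^ 2 / R ^ 2) fun _ => 2 / R ^ 2 := by
  simpa only [div_eq_inv_mul] using hasRadialDeriv_norm_sq.const_mul (R ^ 2)⁻¹

lemma hasRadialDeriv_ballCutoff :
    HasRadialDeriv (n := n) (ballCutoff R) (ballCutoff' R) := by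
  simpa only [mul_comm] using! hasRadialDeriv_norm_sq_div.comp fun _ => hasDerivAt_cutoff _

lemma hasRadialDeriv_ballCutoff' :
    HasRadialDeriv (n := n) (ballCutoff' R) (ballCutoff'' R) := by
  have h := ((hasRadialDeriv_norm_sq_div (n := n) (R := R)).comp fun x =>
    ((contDiff_deriv_cutoff (k := 1)).differentiable one_ne_zero
      (‖x‖ ^ 2 / R ^ 2)).hasDerivAt).const_mul (2 / R ^ 2)
  refine fun x => (h x).congr_fderiv ?_
  congr 1
  simp only [ballCutoff'']
  ring

lemma ballCutoff_nonneg : 0 ≤ ballCutoff R x := cutoff_nonneg _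

lemma ballCutoff_le_one : ballCutoff R x ≤ 1 := cutoff_le_one _

lemma ballCutoff_eq_one (hR : 0 < R) (hx : ‖x‖ ≤ R) : ballCutoff R x = 1 :=
  cutoff_eq_one ((div_le_one (by positivity)).2 (pow_le_pow_left₀ (norm_nonneg x) hx 2))

lemma two_lt_norm_sq_div (hR : 0 < R) (hx : 2 * R ≤ ‖x‖) : 2 < ‖x‖ ^ 2 / R ^ 2 :=
  (lt_div_iff₀ (by positivity)).2 (by nlinarith)

lemma norm_sq_div_notMem_Icc (hR : 0 < R) (hx : ‖x‖ < R ∨ 2 * R ≤ ‖x‖) :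
    ‖x‖ ^ 2 / R ^ 2 ∉ Icc 1 2 := by
  rcases hx with hx | hx
  · refine fun h => h.1.not_gt ((div_lt_one (by positivity)).2 ?_)
    exact pow_lt_pow_left₀ hx (norm_nonneg x) two_ne_zero
  · exact fun h => h.2.not_gt (two_lt_norm_sq_div hR hx)

lemma ballCutoff_eq_zero (hR : 0 < R) (hx : 2 * R ≤ ‖x‖) : ballCutoff R x = 0 :=
  cutoff_eq_zero (two_lt_norm_sq_div hR hx).le

lemma ballCutoff'_eq_zero (hR : 0 < R) (hx : ‖x‖ < R ∨ 2 * R ≤ ‖x‖) : ballCutoff' R x = 0 := by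
  rw [ballCutoff', deriv_cutoff_eq_zero (norm_sq_div_notMem_Icc hR hx), mul_zero]

lemma ballCutoff''_eq_zero (hR : 0 < R) (hx : ‖x‖ < R ∨ 2 * R ≤ ‖x‖) :
    ballCutoff'' R x = 0 := by
  rw [ballCutoff'', deriv_deriv_cutoff_eq_zero (norm_sq_div_notMem_Icc hR hx), mul_zero]

lemma abs_ballCutoff'_le : |ballCutoff' R x| ≤ 2 / R ^ 2 * cutoffBound := by
  rw [ballCutoff', abs_mul, abs_of_nonneg (by positivity)]
  gcongr
  exact abs_deriv_cutoff_le _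

lemma abs_ballCutoff''_le : |ballCutoff'' R x| ≤ 4 / R ^ 4 * cutoffBound := by
  rw [ballCutoff'', abs_mul, abs_of_nonneg (by positivity)]
  gcongr
  exact abs_deriv_deriv_cutoff_le _

end BallCutoff

section LocalizedMorawetz

variable {n : ℕ} {V : Type*} [NormedAddCommGroup V] [InnerProductSpace ℝ V]
  {U : SpaceTime n → V} {p : SpaceTime n} {ε R : ℝ}

/-- The density `H |∇U|² + H' |x·∇U|²` controlled by the Morawetz identity. -/
def gradDensity (ε : ℝ) (U : SpaceTime n → V) (p : SpaceTime n) : ℝ :=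
  gradWeight ε p.2 * ∑ i, ‖∂ₓ i U p‖ ^ 2 + gradWeight' ε p.2 * ‖scalingDeriv U p‖ ^ 2

/-- The terms in the localized Morawetz identity that contain derivatives of the cutoff. -/
def cutoffError (ε R : ℝ) (U : SpaceTime n → V) (p : SpaceTime n) : ℝ :=
  -(ballCutoff' R p.2 * gradWeight ε p.2 * ‖scalingDeriv U p‖ ^ 2)
    - ‖p.2‖ ^ 2 * ballCutoff' R p.2 * gradWeight ε p.2 / 2 * lagrangianDensity U p
    + (n * ballCutoff' R p.2 * zeroWeight ε p.2
      + ‖p.2‖ ^ 2 * (ballCutoff'' R p.2 * zeroWeight ε p.2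
        + 2 * ballCutoff' R p.2 * zeroWeight' ε p.2)) / 2 * ‖U p‖ ^ 2

/-- The Morawetz multiplier `ζ (H x·∇U + G U)`, localized to the ball of radius `2R`. -/
def localMultiplier (ε R : ℝ) : (SpaceTime n → V) → SpaceTime n → V :=
  morawetzMultiplier (fun x => ballCutoff R x * gradWeight ε x)
    fun x => ballCutoff R x * zeroWeight ε x

/-- The flux density that belongs to `localMultiplier`. -/
def localFlux (ε R : ℝ) : (SpaceTime n → V) → SpaceTime n → ℝ :=
  morawetzFlux (fun x => ballCutoff R x * gradWeight ε x)
    fun x => ballCutoff' R x * zeroWeight ε x + ballCutoff R x * zeroWeight' ε x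

/-- The `i`-th spatial component of the current that belongs to `localMultiplier`. -/
def localCurrent (ε R : ℝ) (U : SpaceTime n → V) (i : Fin n) (p : SpaceTime n) : ℝ :=
  ⟪∂ₓ i U p, localMultiplier ε R U p⟫ + p.2 i * localFlux ε R U p

/-- The space-time divergence of the current that belongs to `localMultiplier`. -/
def localDivergence (ε R : ℝ) (U : SpaceTime n → V) (p : SpaceTime n) : ℝ :=
  ∂ₜ (fun q => ⟪∂ₜ U q, localMultiplier ε R U q⟫) p
    - ∑ i, ∂ₓ i (localCurrent ε R U i) p

/-- By `zeroWeight_eq` the Lagrangian density only enters where `ζ` is not constant. -/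
theorem IsWave.localized_morawetz_identity (hU : IsWave U) (hε : 0 < ε) :
    localDivergence ε R U p = -(ballCutoff R p.2 * gradDensity ε U p)
        + ballCutoff R p.2 * (n * zeroWeight' ε p.2 + ‖p.2‖ ^ 2 * zeroWeight'' ε p.2) / 2
          * ‖U p‖ ^ 2
        + cutoffError ε R U p := by
  have hζ := hasRadialDeriv_ballCutoff (n := n) (R := R)
  have hζ' := hasRadialDeriv_ballCutoff' (n := n) (R := R)
  have hG := hasRadialDeriv_zeroWeight (n := n) hε
  have hG' := hasRadialDeriv_zeroWeight' (n := n) hε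
  refine (hU.morawetz_identity (hζ.mul (hasRadialDeriv_gradWeight hε)) (hζ.mul hG)
    ((hζ'.mul hG).add (hζ.mul hG'))).trans ?_
  rw [gradDensity, cutoffError]
  linear_combination ballCutoff R p.2 * lagrangianDensity U p * zeroWeight_eq hε p.2

lemma IsWave.ballCutoff_mul_gradDensity_le (hU : IsWave U) (hn : 3 ≤ n) (hε : 0 < ε) :
    ballCutoff R p.2 * gradDensity ε U p ≤ -localDivergence ε R U p + cutoffError ε R U p := by
  rw [hU.localized_morawetz_identity hε]
  have h := mul_nonpos_of_nonneg_of_nonpos (ballCutoff_nonneg (R := R) (x := p.2))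
    (zeroWeight_superharmonic hn hε p.2)
  have := mul_nonpos_of_nonpos_of_nonneg (div_nonpos_of_nonpos_of_nonneg h zero_le_two)
    (sq_nonneg ‖U p‖)
  linarith

lemma cutoffError_eq_zero (hR : 0 < R) (hp : ‖p.2‖ < R ∨ 2 * R ≤ ‖p.2‖) :
    cutoffError ε R U p = 0 := by
  simp [cutoffError, ballCutoff'_eq_zero hR hp, ballCutoff''_eq_zero hR hp]

lemma inv_smoothNorm_le (hR : 0 < R) {x : Eucl n} (hx : R ≤ ‖x‖) : (smoothNorm ε x)⁻¹ ≤ R⁻¹ :=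
  inv_anti₀ hR (hx.trans (norm_le_smoothNorm ε x))

lemma norm_sq_le_of_norm_le_two_mul {x : Eucl n} (hx : ‖x‖ ≤ 2 * R) : ‖x‖ ^ 2 ≤ 4 * R ^ 2 := by
  nlinarith [norm_nonneg x]

lemma abs_cutoffError_grad_le (hU : DifferentiableAt ℝ U p) (hε : 0 < ε) (hR : 0 < R)
    (h₁ : R ≤ ‖p.2‖) (h₂ : ‖p.2‖ ≤ 2 * R) :
    |ballCutoff' R p.2 * gradWeight ε p.2 * ‖scalingDeriv U p‖ ^ 2|
      + |‖p.2‖ ^ 2 * ballCutoff' R p.2 * gradWeight ε p.2 / 2 * lagrangianDensity U p|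
      ≤ cutoffBound * (12 * R⁻¹ * energyDensity U p) := by
  have hM := cutoffBound_nonneg
  have hr := norm_sq_le_of_norm_le_two_mul h₂
  have hHpos := gradWeight_pos hε p.2
  have hH : gradWeight ε p.2 ≤ R⁻¹ :=
    (gradWeight_le_inv_smoothNorm hε p.2).trans (inv_smoothNorm_le hR h₁)
  have hA : ‖scalingDeriv U p‖ ^ 2 ≤ 4 * R ^ 2 * energyDensity U p :=
    (norm_sq_scalingDeriv_le hU).trans <|
      mul_le_mul hr (le_add_of_nonneg_left (sq_nonneg _))
        (Finset.sum_nonneg fun _ _ => sq_nonneg _) (by positivity)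
  simp only [abs_mul, abs_div, abs_pow, abs_norm, abs_two, abs_of_pos hHpos]
  calc |ballCutoff' R p.2| * gradWeight ε p.2 * ‖scalingDeriv U p‖ ^ 2
        + ‖p.2‖ ^ 2 * |ballCutoff' R p.2| * gradWeight ε p.2 / 2 * |lagrangianDensity U p|
      ≤ 2 / R ^ 2 * cutoffBound * R⁻¹ * (4 * R ^ 2 * energyDensity U p)
        + 4 * R ^ 2 * (2 / R ^ 2 * cutoffBound) * R⁻¹ / 2 * energyDensity U p := by
        gcongr
        exacts [abs_ballCutoff'_le, abs_ballCutoff'_le, abs_lagrangianDensity_le U p]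
    _ = cutoffBound * (12 * R⁻¹ * energyDensity U p) := by
        field

lemma abs_cutoffError_zero_le (hn : 2 ≤ n) (hε : 0 < ε) (hR : 0 < R) {x : Eucl n} (h₁ : R ≤ ‖x‖)
    (h₂ : ‖x‖ ≤ 2 * R) :
    |(n * ballCutoff' R x * zeroWeight ε x + ‖x‖ ^ 2 * (ballCutoff'' R x * zeroWeight ε x
      + 2 * ballCutoff' R x * zeroWeight' ε x)) / 2| ≤ cutoffBound * (17 * n ^ 2 * R⁻¹ ^ 3) := by
  have hM := cutoffBound_nonneg
  have hr := norm_sq_le_of_norm_le_two_mul h₂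
  have hs := inv_smoothNorm_le (ε := ε) hR h₁
  have hspos := inv_pos.2 (smoothNorm_pos hε x)
  have hG : |zeroWeight ε x| ≤ n * R⁻¹ := by
    rw [abs_of_nonneg (zeroWeight_nonneg hn hε x)]
    exact (zeroWeight_le hn hε x).trans (by gcongr)
  have hG' : |zeroWeight' ε x| ≤ n * R⁻¹ ^ 3 := (abs_zeroWeight'_le hn hε x).trans (by gcongr)
  have hn₂ : (n : ℝ) ≤ n ^ 2 := mod_cast Nat.le_self_pow two_ne_zero n
  rw [abs_div, abs_two]
  calc |n * ballCutoff' R x * zeroWeight ε x + ‖x‖ ^ 2 * (ballCutoff'' R x * zeroWeight ε x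
        + 2 * ballCutoff' R x * zeroWeight' ε x)| / 2
      ≤ (n * |ballCutoff' R x| * |zeroWeight ε x| + ‖x‖ ^ 2 * (|ballCutoff'' R x|
        * |zeroWeight ε x| + 2 * |ballCutoff' R x| * |zeroWeight' ε x|)) / 2 := by
        gcongr
        refine (abs_add_le _ _).trans ?_
        simp only [abs_mul, Nat.abs_cast, abs_pow, abs_norm]
        gcongr
        exact (abs_add_le _ _).trans_eq (by simp only [abs_mul, abs_two])
    _ ≤ (n * (2 / R ^ 2 * cutoffBound) * (n * R⁻¹) + 4 * R ^ 2 * (4 / R ^ 4 * cutoffBound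
        * (n * R⁻¹) + 2 * (2 / R ^ 2 * cutoffBound) * (n * R⁻¹ ^ 3))) / 2 := by
        gcongr
        exacts [abs_ballCutoff'_le, abs_ballCutoff''_le, abs_ballCutoff'_le]
    _ = cutoffBound * ((n ^ 2 + 16 * n) * R⁻¹ ^ 3) := by field
    _ ≤ cutoffBound * (17 * n ^ 2 * R⁻¹ ^ 3) := by
        gcongr
        linarith

lemma abs_cutoffError_le (hU : DifferentiableAt ℝ U p) (hn : 2 ≤ n) (hε : 0 < ε) (hR : 0 < R) :
    |cutoffError ε R U p| ≤ (Metric.closedBall 0 (2 * R)).indicator (fun _ => cutoffBound *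
      (12 * R⁻¹ * energyDensity U p + 17 * n ^ 2 * R⁻¹ ^ 3 * ‖U p‖ ^ 2)) p.2 := by
  have hM := cutoffBound_nonneg
  have he := energyDensity_nonneg U p
  by_cases h : ‖p.2‖ < R ∨ 2 * R ≤ ‖p.2‖
  · rw [cutoffError_eq_zero hR h, abs_zero]
    exact indicator_nonneg (fun _ _ => by positivity) _
  rw [not_or, not_lt, not_le] at h
  rw [indicator_of_mem (mem_closedBall_zero_iff.2 h.2.le), cutoffError,
    mul_add cutoffBound]
  refine (abs_add_le _ _).trans (add_le_add ?_ ?_)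
  · refine (abs_sub _ _).trans ?_
    rw [abs_neg]
    exact abs_cutoffError_grad_le hU hε hR h.1 h.2.le
  · rw [abs_mul, abs_pow, abs_norm, ← mul_assoc cutoffBound]
    gcongr
    exact abs_cutoffError_zero_le hn hε hR h.1 h.2.le

end LocalizedMorawetz

section Poincare

variable {n : ℕ} {V : Type*} [NormedAddCommGroup V] [InnerProductSpace ℝ V]

lemma norm_sq_sub_le_lintegral_segment {E : Type*} [NormedAddCommGroup E] [NormedSpace ℝ E]
    {F : E → V} (hF : ContDiff ℝ 1 F) (p v : E) :
    ENNReal.ofReal (‖F (p + v) - F p‖ ^ 2) ≤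
      ∫⁻ θ in Icc (0 : ℝ) 1, ENNReal.ofReal (‖dirDeriv v F (p + θ • v)‖ ^ 2) := by
  set w := F (p + v) - F p with hw
  have hD : Continuous fun θ : ℝ => dirDeriv v F (p + θ • v) :=
    (continuous_dirDeriv hF v).comp (by fun_prop)
  have hderiv (θ : ℝ) : HasDerivAt (fun θ : ℝ => ⟪F (p + θ • v), w⟫)
      ⟪dirDeriv v F (p + θ • v), w⟫ θ := by
    have hline : HasDerivAt (fun θ : ℝ => p + θ • v) v θ := by
      simpa using ((hasDerivAt_id θ).smul_const v).const_add p
    have hcomp : HasDerivAt (fun θ : ℝ => F (p + θ • v)) (dirDeriv v F (p + θ • v)) θ :=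
      (hF.differentiable one_ne_zero _).hasFDerivAt.comp_hasDerivAt θ hline
    simpa using hcomp.inner ℝ (hasDerivAt_const θ w)
  have hftc : ‖w‖ ^ 2 = ∫ θ in (0 : ℝ)..1, ⟪dirDeriv v F (p + θ • v), w⟫ := by
    rw [intervalIntegral.integral_eq_sub_of_hasDerivAt (fun θ _ => hderiv θ)
      ((hD.inner continuous_const).intervalIntegrable _ _), ← inner_sub_left]
    simp [hw]
  have hle : ‖w‖ ^ 2 ≤ ∫ θ in (0 : ℝ)..1, (‖dirDeriv v F (p + θ • v)‖ ^ 2 + ‖w‖ ^ 2) / 2 := by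
    refine hftc.trans_le (intervalIntegral.integral_mono_on zero_le_one
      ((hD.inner continuous_const).intervalIntegrable _ _)
      (Continuous.intervalIntegrable (by fun_prop) _ _) fun θ _ => ?_)
    nlinarith [real_inner_le_norm (dirDeriv v F (p + θ • v)) w,
      sq_nonneg (‖dirDeriv v F (p + θ • v)‖ - ‖w‖)]
  have hcont : Continuous fun θ : ℝ => ‖dirDeriv v F (p + θ • v)‖ ^ 2 := hD.norm.pow 2
  rw [intervalIntegral.integral_div, intervalIntegral.integral_add
    (hcont.intervalIntegrable _ _) (by simp), intervalIntegral.integral_const, sub_zero,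
    one_smul] at hle
  rw [← ofReal_integral_eq_lintegral_ofReal hcont.integrableOn_Icc
    (ae_of_all _ fun θ => sq_nonneg _), integral_Icc_eq_integral_Ioc,
    ← intervalIntegral.integral_of_le zero_le_one]
  exact ENNReal.ofReal_le_ofReal (by linarith)

lemma lintegral_comp_smul_add_le {g : Eucl n → ℝ≥0∞} (hg : Measurable g) {θ : ℝ}
    (hθ : 1 / 2 ≤ θ) (b : Eucl n) : ∫⁻ x, g (θ • x + b) ≤ 2 ^ n * ∫⁻ x, g x := by
  have hθ₀ : 0 < θ := by linarith
  have hinv : θ⁻¹ ≤ 2 := inv_le_of_inv_le₀ two_pos (by linarith)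
  calc ∫⁻ x, g (θ • x + b)
      = ∫⁻ x, g (x + b) ∂(Measure.map (θ • ·) volume) :=
        (lintegral_map (f := fun x => g (x + b)) (by fun_prop) (by fun_prop)).symm
    _ = ENNReal.ofReal (θ⁻¹ ^ n) * ∫⁻ x, g x := by
        rw [Measure.map_addHaar_smul _ hθ₀.ne', lintegral_smul_measure,
          lintegral_add_right_eq_self, finrank_euclideanSpace_fin, abs_of_pos (by positivity),
          inv_pow, smul_eq_mul]
    _ ≤ 2 ^ n * ∫⁻ x, g x := by
        gcongr
        rw [ENNReal.ofReal_pow (by positivity)]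
        gcongr
        simpa using ENNReal.ofReal_le_ofReal hinv

/-- Change variables in whichever endpoint of the segment carries the larger weight. -/
lemma lintegral_lintegral_segment_le {g : Eucl n → ℝ≥0∞} (hg : Measurable g) (B : Set (Eucl n))
    (θ : ℝ) : ∫⁻ y in B, ∫⁻ x in B, g (y + θ • (x - y)) ≤ volume B * (2 ^ n * ∫⁻ x, g x) := by
  have hconst (c : ℝ≥0∞) : volume B * c = ∫⁻ _ in B, c := by rw [setLIntegral_const, mul_comm]
  rw [hconst]
  rcases le_total (1 / 2) θ with h | h
  · refine lintegral_mono fun y => (setLIntegral_le_lintegral _ _).trans ?_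
    have hpt (x : Eucl n) : y + θ • (x - y) = θ • x + (1 - θ) • y := by module
    simpa only [hpt] using lintegral_comp_smul_add_le hg h ((1 - θ) • y)
  · have hm : Measurable fun q : Eucl n × Eucl n => g (q.1 + θ • (q.2 - q.1)) :=
      hg.comp (by fun_prop)
    rw [lintegral_lintegral_swap hm.aemeasurable]
    refine lintegral_mono fun x => (setLIntegral_le_lintegral _ _).trans ?_
    have hpt (y : Eucl n) : y + θ • (x - y) = (1 - θ) • y + θ • x := by module
    simpa only [hpt] using lintegral_comp_smul_add_le hg (by linarith : 1 / 2 ≤ 1 - θ) (θ • x)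

lemma lintegral_lintegral_norm_sq_sub_le {f : Eucl n → V} (hf : ContDiff ℝ 1 f) {ρ : ℝ}
    {B : Set (Eucl n)} (hB : MeasurableSet B) (hdiam : ∀ x ∈ B, ∀ y ∈ B, ‖x - y‖ ≤ ρ) :
    ∫⁻ y in B, ∫⁻ x in B, ENNReal.ofReal (‖f x - f y‖ ^ 2) ≤
      volume B * (ENNReal.ofReal (ρ ^ 2) * 2 ^ n * ∫⁻ x, ENNReal.ofReal (gradNormSq f x)) := by
  have hG : Measurable fun x => ENNReal.ofReal (ρ ^ 2) * ENNReal.ofReal (gradNormSq f x) :=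
    (continuous_gradNormSq hf).measurable.ennreal_ofReal.const_mul _
  set G := fun x => ENNReal.ofReal (ρ ^ 2) * ENNReal.ofReal (gradNormSq f x)
  have hsegment {x y : Eucl n} (hx : x ∈ B) (hy : y ∈ B) : ENNReal.ofReal (‖f x - f y‖ ^ 2) ≤
      ∫⁻ θ in Icc (0 : ℝ) 1, G (y + θ • (x - y)) := by
    have h := norm_sq_sub_le_lintegral_segment hf y (x - y)
    rw [add_sub_cancel] at h
    refine h.trans (lintegral_mono fun θ => ?_)
    change _ ≤ ENNReal.ofReal (ρ ^ 2) * ENNReal.ofReal _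
    rw [← ENNReal.ofReal_mul (sq_nonneg ρ)]
    refine ENNReal.ofReal_le_ofReal ((norm_sq_dirDeriv_le f _ _).trans ?_)
    have := gradNormSq_nonneg f (y + θ • (x - y))
    gcongr
    exact hdiam x hx y hy
  calc ∫⁻ y in B, ∫⁻ x in B, ENNReal.ofReal (‖f x - f y‖ ^ 2)
      ≤ ∫⁻ y in B, ∫⁻ x in B, ∫⁻ θ in Icc (0 : ℝ) 1, G (y + θ • (x - y)) :=
        setLIntegral_mono' hB fun y hy => setLIntegral_mono' hB fun x hx => hsegment hx hy
    _ = ∫⁻ y in B, ∫⁻ θ in Icc (0 : ℝ) 1, ∫⁻ x in B, G (y + θ • (x - y)) :=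
        lintegral_congr fun y => lintegral_lintegral_swap (hG.comp (by fun_prop)).aemeasurable
    _ = ∫⁻ θ in Icc (0 : ℝ) 1, ∫⁻ y in B, ∫⁻ x in B, G (y + θ • (x - y)) := by
        have hm : Measurable fun q : (Eucl n × ℝ) × Eucl n => G (q.1.1 + q.1.2 • (q.2 - q.1.1)) :=
          hG.comp (by fun_prop)
        exact lintegral_lintegral_swap hm.lintegral_prod_right'.aemeasurable
    _ ≤ ∫⁻ θ in Icc (0 : ℝ) 1, volume B * (2 ^ n * ∫⁻ x, G x) :=
        lintegral_mono fun θ => lintegral_lintegral_segment_le hG B θ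
    _ = _ := by
        rw [lintegral_const_mul' _ _ ENNReal.ofReal_ne_top, setLIntegral_const, Real.volume_Icc]
        simp only [sub_zero, ENNReal.ofReal_one]
        ring

/-- A weak form of Poincaré's inequality: the gradient is integrated over the whole space. -/
theorem exists_lintegral_closedBall_norm_sq_sub_le {f : Eucl n → V} (hf : ContDiff ℝ 1 f) {ρ : ℝ}
    (hρ : 0 < ρ) : ∃ c, ∫⁻ x in Metric.closedBall 0 ρ, ENNReal.ofReal (‖f x - c‖ ^ 2) ≤
      ENNReal.ofReal ((2 * ρ) ^ 2) * 2 ^ n * ∫⁻ x, ENNReal.ofReal (gradNormSq f x) := by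
  have hfc := hf.continuous
  have hmeas : Measurable fun q : Eucl n × Eucl n => ENNReal.ofReal (‖f q.2 - f q.1‖ ^ 2) :=
    Measurable.ennreal_ofReal (Continuous.measurable (by fun_prop))
  obtain ⟨y, -, hy⟩ := exists_le_setLAverage (μ := volume) (s := Metric.closedBall (0 : Eucl n) ρ)
    (f := fun y => ∫⁻ x in Metric.closedBall 0 ρ, ENNReal.ofReal (‖f x - f y‖ ^ 2))
    (Metric.measure_closedBall_pos volume _ hρ).ne'
    (isCompact_closedBall (0 : Eucl n) ρ).measure_lt_top.ne
    hmeas.lintegral_prod_right'.aemeasurable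
  refine ⟨f y, hy.trans ?_⟩
  rw [setLAverage_eq]
  refine ENNReal.div_le_of_le_mul' (lintegral_lintegral_norm_sq_sub_le hf measurableSet_closedBall
    fun x hx y hy => ?_)
  have := norm_sub_le x y
  linarith [mem_closedBall_zero_iff.1 hx, mem_closedBall_zero_iff.1 hy]

end Poincare

section LocalL2Bound

variable {n : ℕ} {V : Type*} [NormedAddCommGroup V] [InnerProductSpace ℝ V]
  {U : SpaceTime n → V}

/-- An `L²` bound by the energy on balls of radius `2R`, for times `|t| ≤ R`. -/
def HasLocalL2Bound (K R : ℝ) (U : SpaceTime n → V) : Prop :=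
  ∀ t ∈ Icc (-R) R, ∫⁻ x in Metric.closedBall 0 (2 * R), ENNReal.ofReal (‖U (t, x)‖ ^ 2) ≤
    ENNReal.ofReal (K * R ^ 2) * energy U 0

lemma ofReal_norm_sq_sub_le {E : Type*} [SeminormedAddCommGroup E] (a b c : E) :
    ENNReal.ofReal (‖a - c‖ ^ 2) ≤
      2 * ENNReal.ofReal (‖a - b‖ ^ 2) + 2 * ENNReal.ofReal (‖b - c‖ ^ 2) := by
  have h := norm_sub_le_norm_sub_add_norm_sub a b c
  rw [← ENNReal.ofReal_ofNat 2, ← ENNReal.ofReal_mul two_pos.le, ← ENNReal.ofReal_mul two_pos.le,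
    ← ENNReal.ofReal_add (by positivity) (by positivity)]
  refine ENNReal.ofReal_le_ofReal ?_
  nlinarith [norm_nonneg (a - c), add_sq_le (a := ‖a - b‖) (b := ‖b - c‖)]

lemma energy_sub_const (U : SpaceTime n → V) (c : V) (t : ℝ) :
    energy (fun p => U p - c) t = energy U t := by
  simp only [energy, energyDensity, dirDeriv_sub_const]

lemma lintegral_gradNormSq_le_energy (hU : Differentiable ℝ U) (t : ℝ) :
    ∫⁻ x, ENNReal.ofReal (gradNormSq (fun y => U (t, y)) x) ≤ energy U t :=
  lintegral_mono fun x => ENNReal.ofReal_le_ofReal <| by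
    rw [gradNormSq_slice (hU (t, x)) (p := (t, x))]
    exact le_add_of_nonneg_left (sq_nonneg _)

namespace IsWave

lemma lintegral_norm_sq_sub_le (hU : IsWave U) (T : ℝ) :
    ∫⁻ x, ENNReal.ofReal (‖U (T, x) - U (0, x)‖ ^ 2) ≤ ENNReal.ofReal (T ^ 2) * energy U 0 := by
  have hcont := hU.contDiff_energyDensity.continuous
  have hsegment (x : Eucl n) : ENNReal.ofReal (‖U (T, x) - U (0, x)‖ ^ 2) ≤
      ∫⁻ θ in Icc (0 : ℝ) 1,
        ENNReal.ofReal (T ^ 2) * ENNReal.ofReal (energyDensity U (θ * T, x)) := by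
    have h := norm_sq_sub_le_lintegral_segment (hU.contDiff.of_le one_le_two) (0, x) (T, 0)
    simp only [Prod.mk_add_mk, zero_add, add_zero, Prod.smul_mk, smul_zero, smul_eq_mul] at h
    refine h.trans (lintegral_mono fun θ => ?_)
    have hscale : dirDeriv (T, 0) U (θ * T, x) = T • ∂ₜ U (θ * T, x) := by
      simpa using! (fderiv ℝ U (θ * T, x)).map_smul T (1, 0)
    rw [← ENNReal.ofReal_mul (sq_nonneg T), hscale, norm_smul, mul_pow, Real.norm_eq_abs, sq_abs]
    refine ENNReal.ofReal_le_ofReal (mul_le_mul_of_nonneg_left ?_ (sq_nonneg T))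
    exact le_add_of_nonneg_right (Finset.sum_nonneg fun _ _ => sq_nonneg _)
  calc ∫⁻ x, ENNReal.ofReal (‖U (T, x) - U (0, x)‖ ^ 2)
      ≤ ∫⁻ x, ∫⁻ θ in Icc (0 : ℝ) 1,
          ENNReal.ofReal (T ^ 2) * ENNReal.ofReal (energyDensity U (θ * T, x)) :=
        lintegral_mono hsegment
    _ = ∫⁻ θ in Icc (0 : ℝ) 1, ENNReal.ofReal (T ^ 2) * energy U (θ * T) := by
        rw [lintegral_lintegral_swap (Measurable.aemeasurable
          ((Continuous.measurable (by fun_prop)).ennreal_ofReal.const_mul _))]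
        simp only [lintegral_const_mul' _ _ ENNReal.ofReal_ne_top, energy]
    _ ≤ ∫⁻ θ in Icc (0 : ℝ) 1, ENNReal.ofReal (T ^ 2) * energy U 0 := by
        gcongr
        exact hU.energy_le _
    _ = ENNReal.ofReal (T ^ 2) * energy U 0 := by simp

theorem exists_hasLocalL2Bound_sub_const (hU : IsWave U) {R : ℝ} (hR : 0 < R) :
    ∃ c, HasLocalL2Bound (32 * 2 ^ n + 2) R fun p => U p - c := by
  obtain ⟨c, hc⟩ := exists_lintegral_closedBall_norm_sq_sub_le
    (contDiff_slice (hU.contDiff.of_le one_le_two) 0) (by positivity : 0 < 2 * R)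
  refine ⟨c, fun t ht => ?_⟩
  rw [energy_sub_const]
  have hcont := hU.contDiff.continuous
  have htR : t ^ 2 ≤ R ^ 2 := sq_le_sq' ht.1 ht.2
  have hmeas : Measurable fun x => ENNReal.ofReal (‖U (t, x) - U (0, x)‖ ^ 2) :=
    (Continuous.measurable (by fun_prop)).ennreal_ofReal
  calc ∫⁻ x in Metric.closedBall 0 (2 * R), ENNReal.ofReal (‖U (t, x) - c‖ ^ 2)
      ≤ 2 * (∫⁻ x in Metric.closedBall 0 (2 * R), ENNReal.ofReal (‖U (t, x) - U (0, x)‖ ^ 2)) +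
        2 * ∫⁻ x in Metric.closedBall 0 (2 * R), ENNReal.ofReal (‖U (0, x) - c‖ ^ 2) := by
        rw [← lintegral_const_mul' _ _ ENNReal.ofNat_ne_top,
          ← lintegral_const_mul' _ _ ENNReal.ofNat_ne_top, ← lintegral_add_left (hmeas.const_mul 2)]
        exact lintegral_mono fun x => ofReal_norm_sq_sub_le _ _ _
    _ ≤ 2 * (ENNReal.ofReal (R ^ 2) * energy U 0) +
        2 * (ENNReal.ofReal ((2 * (2 * R)) ^ 2) * 2 ^ n * energy U 0) := by
        gcongr
        · refine (setLIntegral_le_lintegral _ _).trans ((hU.lintegral_norm_sq_sub_le t).trans ?_)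
          gcongr
        · refine hc.trans ?_
          gcongr
          exact lintegral_gradNormSq_le_energy (hU.contDiff.differentiable two_ne_zero) 0
    _ = ENNReal.ofReal ((32 * 2 ^ n + 2) * R ^ 2) * energy U 0 := by
        rw [show (32 * 2 ^ n + 2) * R ^ 2 = 2 * R ^ 2 + 2 * ((2 * (2 * R)) ^ 2 * 2 ^ n) by ring,
          ENNReal.ofReal_add (by positivity) (by positivity),
          ENNReal.ofReal_mul two_pos.le, ENNReal.ofReal_mul two_pos.le,
          ENNReal.ofReal_mul (by positivity), ENNReal.ofReal_pow two_pos.le]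
        simp only [ENNReal.ofReal_ofNat]
        ring

end IsWave

end LocalL2Bound

section Hardy

variable {n : ℕ} {V : Type*} [NormedAddCommGroup V] [InnerProductSpace ℝ V] {ε R : ℝ}

lemma lintegral_ofReal_le_of_le_add {X : Type*} [MeasurableSpace X] {μ : Measure X}
    {f d g : X → ℝ} (hf₀ : ∀ x, 0 ≤ f x) (hf : Integrable f μ) (hd : Integrable d μ)
    (h : ∀ x, f x ≤ d x + g x) :
    ∫⁻ x, ENNReal.ofReal (f x) ∂μ ≤
      ENNReal.ofReal (∫ x, d x ∂μ) + ∫⁻ x, ENNReal.ofReal (g x) ∂μ := by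
  have hpos : Integrable (fun x => max (f x - d x) 0) μ := (hf.sub hd).pos_part
  calc ∫⁻ x, ENNReal.ofReal (f x) ∂μ
      = ENNReal.ofReal (∫ x, f x ∂μ) :=
        (ofReal_integral_eq_lintegral_ofReal hf (ae_of_all _ hf₀)).symm
    _ ≤ ENNReal.ofReal ((∫ x, d x ∂μ) + ∫ x, max (f x - d x) 0 ∂μ) := by
        rw [← integral_add hd hpos]
        refine ENNReal.ofReal_le_ofReal (integral_mono hf (hd.add hpos) fun x => ?_)
        change f x ≤ d x + max (f x - d x) 0
        linarith [le_max_left (f x - d x) 0]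
    _ ≤ ENNReal.ofReal (∫ x, d x ∂μ) + ENNReal.ofReal (∫ x, max (f x - d x) 0 ∂μ) :=
        ENNReal.ofReal_add_le
    _ ≤ ENNReal.ofReal (∫ x, d x ∂μ) + ∫⁻ x, ENNReal.ofReal (g x) ∂μ := by
        gcongr
        rw [ofReal_integral_eq_lintegral_ofReal hpos (ae_of_all _ fun x => le_max_right _ _)]
        refine lintegral_mono fun x => ?_
        rw [ENNReal.ofReal_max, ENNReal.ofReal_zero, max_eq_left zero_le]
        exact ENNReal.ofReal_le_ofReal (by linarith [h x])

/-- The weight `ζ / (ε² + |x|²)` in the localized Hardy inequality. -/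
def hardyWeight (ε R : ℝ) (x : Eucl n) : ℝ := ballCutoff R x * (smoothNorm ε x)⁻¹ ^ 2

lemma hardyWeight_nonneg (x : Eucl n) : 0 ≤ hardyWeight ε R x :=
  mul_nonneg ballCutoff_nonneg (sq_nonneg _)

lemma hasRadialDeriv_hardyWeight (hε : 0 < ε) :
    HasRadialDeriv (n := n) (hardyWeight ε R) fun x =>
      ballCutoff' R x * (smoothNorm ε x)⁻¹ ^ 2 - 2 * ballCutoff R x * (smoothNorm ε x)⁻¹ ^ 4 := by
  have hs := hasRadialDeriv_inv_smoothNorm (n := n) hε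
  have h := (hasRadialDeriv_ballCutoff (R := R)).mul (hs.mul hs)
  simp only [← pow_two] at h
  refine fun x => (h x).congr_fderiv ?_
  congr 1
  ring

lemma contDiff_hardyWeight (hε : 0 < ε) : ContDiff ℝ 1 (hardyWeight ε R : Eucl n → ℝ) :=
  (contDiff_ballCutoff (k := 1)).mul ((contDiff_inv_smoothNorm hε).pow 2)

/-- Hardy's inequality before integration, by expanding the divergence of `x ζ |f|² / (ε² + |x|²)`
and absorbing the cross term. -/
lemma hardyWeight_mul_norm_sq_le {f : Eucl n → V} (hf : Differentiable ℝ f) (hn : 3 ≤ n)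
    (hε : 0 < ε) (x : Eucl n) :
    hardyWeight ε R x * ‖f x‖ ^ 2 ≤
      2 * (n * (hardyWeight ε R x * ‖f x‖ ^ 2)
        + dirDeriv x (fun y => hardyWeight ε R y * ‖f y‖ ^ 2) x)
      + (4 * gradNormSq f x + 2 * |ballCutoff' R x| * ‖f x‖ ^ 2) := by
  have hn' : (3 : ℝ) ≤ n := mod_cast hn
  have hk := hasRadialDeriv_hardyWeight (n := n) (R := R) hε
  have hrs := norm_sq_mul_inv_smoothNorm_sq_le hε x
  have hζ₀ := ballCutoff_nonneg (R := R) (x := x)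
  have hζ₁ := ballCutoff_le_one (R := R) (x := x)
  rw [dirDeriv_mul (hk x).differentiableAt ((hf x).norm_sq ℝ), hk.dirDeriv_eq,
    dirDeriv_norm_sq (hf x), real_inner_self_eq_norm_sq]
  set s := (smoothNorm ε x)⁻¹
  set g := gradNormSq f x
  have hg : 0 ≤ g := gradNormSq_nonneg f x
  have hk₀ : 0 ≤ ballCutoff R x * s ^ 2 * ‖f x‖ ^ 2 := by positivity
  have hA : ballCutoff R x * s ^ 2 * ‖dirDeriv x f x‖ ^ 2 ≤ g :=
    calc ballCutoff R x * s ^ 2 * ‖dirDeriv x f x‖ ^ 2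
        ≤ 1 * s ^ 2 * (‖x‖ ^ 2 * g) := by
          gcongr
          exact norm_sq_dirDeriv_le f x x
      _ = ‖x‖ ^ 2 * s ^ 2 * g := by ring
      _ ≤ g := mul_le_of_le_one_left hg hrs
  have hcross : -(4 * (ballCutoff R x * s ^ 2) * ⟪f x, dirDeriv x f x⟫) ≤
      ballCutoff R x * s ^ 2 * ‖f x‖ ^ 2 + 4 * g := by
    have hpair := (abs_le.1 (abs_real_inner_le_norm (f x) (dirDeriv x f x))).1
    have hyoung : -(4 * ⟪f x, dirDeriv x f x⟫) ≤ ‖f x‖ ^ 2 + 4 * ‖dirDeriv x f x‖ ^ 2 := by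
      nlinarith [sq_nonneg (‖f x‖ - 2 * ‖dirDeriv x f x‖)]
    have := mul_le_mul_of_nonneg_left hyoung (by positivity : 0 ≤ ballCutoff R x * s ^ 2)
    linarith
  have hcut : -(ballCutoff' R x * (‖x‖ ^ 2 * s ^ 2) * ‖f x‖ ^ 2) ≤
      |ballCutoff' R x| * ‖f x‖ ^ 2 := by
    rw [← neg_mul, ← neg_mul]
    gcongr
    calc -ballCutoff' R x * (‖x‖ ^ 2 * s ^ 2) ≤ |ballCutoff' R x| * 1 := by
          gcongr
          exact neg_le_abs _
      _ = _ := mul_one _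
  have hmain := mul_le_mul_of_nonneg_left hrs hk₀
  have hdim := mul_le_mul_of_nonneg_left hn' hk₀
  simp only [hardyWeight]
  linarith

theorem lintegral_hardyWeight_mul_norm_sq_le {f : Eucl n → V} (hf : ContDiff ℝ 1 f) (hn : 3 ≤ n)
    (hε : 0 < ε) (hR : 0 < R) :
    ∫⁻ x, ENNReal.ofReal (hardyWeight ε R x * ‖f x‖ ^ 2) ≤
      4 * (∫⁻ x, ENNReal.ofReal (gradNormSq f x)) + ENNReal.ofReal (4 * cutoffBound / R ^ 2) *
        ∫⁻ x in Metric.closedBall 0 (2 * R), ENNReal.ofReal (‖f x‖ ^ 2) := by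
  have hφ : ContDiff ℝ 1 fun x => hardyWeight ε R x * ‖f x‖ ^ 2 :=
    (contDiff_hardyWeight hε).mul (hf.norm_sq ℝ)
  have hs : HasCompactSupport fun x => hardyWeight ε R x * ‖f x‖ ^ 2 :=
    hasCompactSupport_of_norm_le fun x hx => by
      rw [hardyWeight, ballCutoff_eq_zero hR hx, zero_mul, zero_mul]
  have hint := hφ.continuous.integrable_of_hasCompactSupport (μ := volume) hs
  have hdiv : Integrable fun x => n * (hardyWeight ε R x * ‖f x‖ ^ 2)
      + dirDeriv x (fun y => hardyWeight ε R y * ‖f y‖ ^ 2) x :=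
    integrable_div_coord_mul hφ hs
  have h := lintegral_ofReal_le_of_le_add
    (fun x => mul_nonneg (hardyWeight_nonneg x) (sq_nonneg ‖f x‖)) hint (hdiv.const_mul 2)
    (hardyWeight_mul_norm_sq_le (hf.differentiable one_ne_zero) hn hε)
  rw [integral_const_mul, integral_div_coord_mul hφ hs, mul_zero, ENNReal.ofReal_zero,
    zero_add] at h
  refine h.trans ?_
  rw [← lintegral_const_mul' _ _ ENNReal.ofNat_ne_top,
    ← lintegral_const_mul' _ _ ENNReal.ofReal_ne_top,
    ← lintegral_indicator measurableSet_closedBall, ← lintegral_add_left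
    ((continuous_gradNormSq hf).measurable.ennreal_ofReal.const_mul 4)]
  refine lintegral_mono fun x => ENNReal.ofReal_add_le.trans (add_le_add ?_ ?_)
  · rw [ENNReal.ofReal_mul zero_le_four, ENNReal.ofReal_ofNat]
  · by_cases hx : x ∈ Metric.closedBall 0 (2 * R)
    · rw [indicator_of_mem hx, ← ENNReal.ofReal_mul (by have := cutoffBound_nonneg; positivity)]
      refine ENNReal.ofReal_le_ofReal (mul_le_mul_of_nonneg_right ?_ (sq_nonneg _))
      exact (mul_le_mul_of_nonneg_left abs_ballCutoff'_le two_pos.le).trans_eq (by ring)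
    · have hx' : 2 * R ≤ ‖x‖ := (not_le.1 (mt mem_closedBall_zero_iff.2 hx)).le
      simp [ballCutoff'_eq_zero hR (.inr hx')]

end Hardy

section MorawetzDensity

variable {n : ℕ} {V : Type*} [NormedAddCommGroup V] [InnerProductSpace ℝ V]
  {U : SpaceTime n → V} {p : SpaceTime n} {ε : ℝ}

/-- `|∂ᵣf(x)|²`, the version of `radSq` for functions with values in a normed space. -/
def radialNormSq (f : Eucl n → V) (x : Eucl n) : ℝ := ‖dirDeriv (‖x‖⁻¹ • x) f x‖ ^ 2

/-- The density `ε (ε + r)⁻² |∂ᵣf|² + (ε + r)⁻¹ |∇̸f|²` of the Morawetz estimate. -/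
def morawetzDensity (ε : ℝ) (f : Eucl n → V) (x : Eucl n) : ℝ :=
  ε / (ε + ‖x‖) ^ 2 * radialNormSq f x + (ε + ‖x‖)⁻¹ * (gradNormSq f x - radialNormSq f x)

lemma radialNormSq_le_gradNormSq (f : Eucl n → V) (x : Eucl n) :
    radialNormSq f x ≤ gradNormSq f x := by
  refine (norm_sq_dirDeriv_le f x _).trans (mul_le_of_le_one_left (gradNormSq_nonneg f x) ?_)
  rw [norm_smul, norm_inv, norm_norm]
  exact pow_le_one₀ (by positivity) (inv_mul_le_one)

lemma morawetzDensity_nonneg (hε : 0 < ε) (f : Eucl n → V) (x : Eucl n) :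
    0 ≤ morawetzDensity ε f x := by
  have := sub_nonneg.2 (radialNormSq_le_gradNormSq f x)
  have : 0 ≤ radialNormSq f x := sq_nonneg _
  unfold morawetzDensity
  positivity

lemma norm_sq_mul_radialNormSq (f : Eucl n → V) (x : Eucl n) :
    ‖x‖ ^ 2 * radialNormSq f x = ‖dirDeriv x f x‖ ^ 2 := by
  rcases eq_or_ne x 0 with rfl | hx
  · simp [dirDeriv]
  rw [radialNormSq, dirDeriv, map_smul, norm_smul, norm_inv, norm_norm, mul_pow, ← mul_assoc,
    ← mul_pow, mul_inv_cancel₀ (norm_ne_zero_iff.2 hx), one_pow, one_mul, dirDeriv]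

lemma gradDensity_eq (hU : DifferentiableAt ℝ U p) (hε : 0 < ε) :
    gradDensity ε U p =
      ε * gradWeight ε p.2 * (smoothNorm ε p.2)⁻¹ * radialNormSq (fun x => U (p.1, x)) p.2
        + gradWeight ε p.2 * (gradNormSq (fun x => U (p.1, x)) p.2
          - radialNormSq (fun x => U (p.1, x)) p.2) := by
  have hS := smoothNorm_pos hε p.2
  have hr := gradWeight_eq hε p.2
  rw [gradDensity, ← gradNormSq_slice hU, scalingDeriv, ← dirDeriv_slice hU,
    ← norm_sq_mul_radialNormSq, gradWeight']
  set a := radialNormSq (fun x => U (p.1, x)) p.2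
  have hSS : smoothNorm ε p.2 * (smoothNorm ε p.2)⁻¹ = 1 := mul_inv_cancel₀ hS.ne'
  linear_combination -gradWeight ε p.2 * (smoothNorm ε p.2)⁻¹ * a * hr
    - gradWeight ε p.2 * a * hSS

lemma morawetzDensity_le_two_mul_gradDensity (hU : DifferentiableAt ℝ U p) (hε : 0 < ε) :
    morawetzDensity ε (fun x => U (p.1, x)) p.2 ≤ 2 * gradDensity ε U p := by
  have hS := smoothNorm_pos hε p.2
  have hle := smoothNorm_le hε p.2
  have hr := norm_nonneg p.2
  have hang := sub_nonneg.2 (radialNormSq_le_gradNormSq (fun x => U (p.1, x)) p.2)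
  have hrad : 0 ≤ radialNormSq (fun x => U (p.1, x)) p.2 := sq_nonneg _
  have hH : (ε + ‖p.2‖)⁻¹ ≤ 2 * gradWeight ε p.2 := by
    rw [gradWeight, ← div_eq_mul_inv, inv_eq_one_div, div_le_div_iff₀ (by positivity)
      (by positivity)]
    linarith
  have hs : (ε + ‖p.2‖)⁻¹ ≤ (smoothNorm ε p.2)⁻¹ := inv_anti₀ hS hle
  rw [gradDensity_eq hU hε, morawetzDensity, mul_add 2]
  refine add_le_add ?_ ?_
  · calc ε / (ε + ‖p.2‖) ^ 2 * radialNormSq (fun x => U (p.1, x)) p.2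
        = ε * (ε + ‖p.2‖)⁻¹ * (ε + ‖p.2‖)⁻¹ * radialNormSq (fun x => U (p.1, x)) p.2 := by
          field
      _ ≤ ε * (2 * gradWeight ε p.2) * (smoothNorm ε p.2)⁻¹
          * radialNormSq (fun x => U (p.1, x)) p.2 := by
          have := gradWeight_pos hε p.2
          gcongr
      _ = _ := by ring
  · rw [← mul_assoc]
    gcongr

lemma gradDensity_nonneg (hU : DifferentiableAt ℝ U p) (hε : 0 < ε) :
    0 ≤ gradDensity ε U p := by
  linarith [morawetzDensity_nonneg hε (fun x => U (p.1, x)) p.2,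
    morawetzDensity_le_two_mul_gradDensity hU hε]

lemma IsWave.continuous_gradDensity (hU : IsWave U) (hε : 0 < ε) :
    Continuous (gradDensity ε U) :=
  (((contDiff_gradWeight hε (k := 0)).continuous.comp continuous_snd).mul
    (continuous_finsetSum _ fun _ _ => (hU.contDiff_dirDeriv _).continuous.norm.pow 2)).add
      (((contDiff_gradWeight' hε (k := 0)).continuous.comp continuous_snd).mul
        (hU.contDiff_scalingDeriv.continuous.norm.pow 2))

lemma gradDensity_sub_const (ε : ℝ) (U : SpaceTime n → V) (c : V) :
    gradDensity ε (fun p => U p - c) = gradDensity ε U := by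
  ext p
  simp only [gradDensity, scalingDeriv, dirDeriv_sub_const]

end MorawetzDensity

section LocalizedEstimate

variable {n : ℕ} {V : Type*} [NormedAddCommGroup V] [InnerProductSpace ℝ V]
  {U : SpaceTime n → V} {p : SpaceTime n} {ε R K t : ℝ}

lemma localMultiplier_eq_zero (hR : 0 < R) (hp : 2 * R ≤ ‖p.2‖) : localMultiplier ε R U p = 0 := by
  simp [localMultiplier, morawetzMultiplier, ballCutoff_eq_zero hR hp]

lemma localFlux_eq_zero (hR : 0 < R) (hp : 2 * R ≤ ‖p.2‖) : localFlux ε R U p = 0 := by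
  simp [localFlux, morawetzFlux, ballCutoff_eq_zero hR hp, ballCutoff'_eq_zero hR (.inr hp)]

lemma IsWave.contDiff_localMultiplier (hU : IsWave U) (hε : 0 < ε) :
    ContDiff ℝ 1 (localMultiplier ε R U) :=
  have hζ := contDiff_ballCutoff (n := n) (R := R) (k := 1)
  (((hζ.mul (contDiff_gradWeight hε)).comp contDiff_snd).smul hU.contDiff_scalingDeriv).add
    (((hζ.mul (contDiff_zeroWeight hε)).comp contDiff_snd).smul (hU.contDiff.of_le one_le_two))

lemma IsWave.contDiff_localFlux (hU : IsWave U) (hε : 0 < ε) :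
    ContDiff ℝ 1 (localFlux ε R U) :=
  have hζ := contDiff_ballCutoff (n := n) (R := R) (k := 1)
  have hζ' := contDiff_ballCutoff' (n := n) (R := R) (k := 1)
  ((((hζ.mul (contDiff_gradWeight hε)).comp contDiff_snd).mul hU.contDiff_lagrangianDensity).sub
    ((((hζ'.mul (contDiff_zeroWeight hε)).add (hζ.mul (contDiff_zeroWeight' hε))).comp
      contDiff_snd).mul ((hU.contDiff.of_le one_le_two).norm_sq ℝ))).div_const 2

/-- The momentum `∫ ⟨∂ₜU, m⟩ dx` at time `t` for the multiplier `m = localMultiplier`. -/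
def localMomentum (ε R : ℝ) (U : SpaceTime n → V) (t : ℝ) : ℝ :=
  ∫ x, ⟪∂ₜ U (t, x), localMultiplier ε R U (t, x)⟫

lemma IsWave.contDiff_inner_localMultiplier (hU : IsWave U) (hε : 0 < ε) (v : SpaceTime n) :
    ContDiff ℝ 1 fun q => ⟪dirDeriv v U q, localMultiplier ε R U q⟫ :=
  (hU.contDiff_dirDeriv v).inner ℝ (hU.contDiff_localMultiplier hε)

lemma IsWave.contDiff_localCurrent (hU : IsWave U) (hε : 0 < ε) (i : Fin n) :
    ContDiff ℝ 1 (localCurrent ε R U i) := by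
  unfold localCurrent
  have := hU.contDiff_inner_localMultiplier (R := R) hε (0, unitVec i)
  have := hU.contDiff_localFlux (R := R) hε
  fun_prop

lemma IsWave.integral_slab_localDivergence (hU : IsWave U) (hε : 0 < ε) (hR : 0 < R) :
    ∫ p in slab n (-R) R, localDivergence ε R U p =
      localMomentum ε R U R - localMomentum ε R U (-R) := by
  have hP := hU.contDiff_inner_localMultiplier (R := R) hε (1, 0)
  have hQ (i : Fin n) := hU.contDiff_localCurrent (R := R) hε i
  refine integral_slab_div hP hQ (ρ := 2 * R) (by linarith) (fun t _ x hx => ?_)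
    fun i t _ x hx => ?_
  · rw [localMultiplier_eq_zero (p := (t, x)) hR hx, inner_zero_right]
  · rw [localCurrent, localMultiplier_eq_zero (p := (t, x)) hR hx,
      localFlux_eq_zero (p := (t, x)) hR hx, inner_zero_right, mul_zero, add_zero]

lemma IsWave.integrableOn_slab_localDivergence (hU : IsWave U) (hε : 0 < ε) (hR : 0 < R) :
    IntegrableOn (localDivergence ε R U) (slab n (-R) R) := by
  have hP := hU.contDiff_inner_localMultiplier (R := R) hε (1, 0)
  have hQ (i : Fin n) := hU.contDiff_localCurrent (R := R) hε i
  have hc : Continuous (localDivergence ε R U) :=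
    (continuous_dirDeriv hP _).sub (continuous_finsetSum _ fun i _ => continuous_dirDeriv (hQ i) _)
  refine integrableOn_slab (ρ := 2 * R) hc fun t _ x hx => ?_
  rw [hU.localized_morawetz_identity hε, ballCutoff_eq_zero hR hx,
    cutoffError_eq_zero (p := (t, x)) hR (.inr hx)]
  ring

lemma norm_sq_localMultiplier_le (hU : DifferentiableAt ℝ U p) (hn : 2 ≤ n) (hε : 0 < ε) :
    ‖localMultiplier ε R U p‖ ^ 2 ≤
      2 * (∑ i, ‖∂ₓ i U p‖ ^ 2 + n ^ 2 * (hardyWeight ε R p.2 * ‖U p‖ ^ 2)) := by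
  have hζ₀ := ballCutoff_nonneg (R := R) (x := p.2)
  have hζ₁ := ballCutoff_le_one (R := R) (x := p.2)
  have hζ₂ : ballCutoff R p.2 ^ 2 ≤ ballCutoff R p.2 := by nlinarith
  have hH := gradWeight_pos hε p.2
  have hG := zeroWeight_nonneg hn hε p.2
  have hgrad : ‖(ballCutoff R p.2 * gradWeight ε p.2) • scalingDeriv U p‖ ^ 2 ≤
      ∑ i, ‖∂ₓ i U p‖ ^ 2 := by
    rw [norm_smul, mul_pow, Real.norm_eq_abs, sq_abs, mul_pow]
    calc ballCutoff R p.2 ^ 2 * gradWeight ε p.2 ^ 2 * ‖scalingDeriv U p‖ ^ 2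
        ≤ 1 ^ 2 * (smoothNorm ε p.2)⁻¹ ^ 2 * (‖p.2‖ ^ 2 * ∑ i, ‖∂ₓ i U p‖ ^ 2) := by
          gcongr
          exacts [gradWeight_le_inv_smoothNorm hε p.2, norm_sq_scalingDeriv_le hU]
      _ = ‖p.2‖ ^ 2 * (smoothNorm ε p.2)⁻¹ ^ 2 * ∑ i, ‖∂ₓ i U p‖ ^ 2 := by ring
      _ ≤ ∑ i, ‖∂ₓ i U p‖ ^ 2 :=
          mul_le_of_le_one_left (Finset.sum_nonneg fun _ _ => sq_nonneg _)
            (norm_sq_mul_inv_smoothNorm_sq_le hε p.2)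
  have hzero : ‖(ballCutoff R p.2 * zeroWeight ε p.2) • U p‖ ^ 2 ≤
      n ^ 2 * (hardyWeight ε R p.2 * ‖U p‖ ^ 2) := by
    rw [norm_smul, mul_pow, Real.norm_eq_abs, sq_abs, mul_pow, hardyWeight]
    calc ballCutoff R p.2 ^ 2 * zeroWeight ε p.2 ^ 2 * ‖U p‖ ^ 2
        ≤ ballCutoff R p.2 * (n * (smoothNorm ε p.2)⁻¹) ^ 2 * ‖U p‖ ^ 2 := by
          gcongr
          exact zeroWeight_le hn hε p.2
      _ = _ := by ring
  calc ‖localMultiplier ε R U p‖ ^ 2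
      ≤ (‖(ballCutoff R p.2 * gradWeight ε p.2) • scalingDeriv U p‖
          + ‖(ballCutoff R p.2 * zeroWeight ε p.2) • U p‖) ^ 2 := by
        gcongr
        exact norm_add_le _ _
    _ ≤ _ := by linarith [add_sq_le (a := ‖(ballCutoff R p.2 * gradWeight ε p.2) •
        scalingDeriv U p‖) (b := ‖(ballCutoff R p.2 * zeroWeight ε p.2) • U p‖)]

lemma abs_inner_localMultiplier_le (hU : DifferentiableAt ℝ U p) (hn : 2 ≤ n) (hε : 0 < ε) :
    |⟪∂ₜ U p, localMultiplier ε R U p⟫| ≤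
      energyDensity U p + n ^ 2 * (hardyWeight ε R p.2 * ‖U p‖ ^ 2) := by
  have h := abs_real_inner_le_norm (∂ₜ U p) (localMultiplier ε R U p)
  have hm := norm_sq_localMultiplier_le (R := R) hU hn hε
  rw [energyDensity]
  nlinarith [sq_nonneg (‖∂ₜ U p‖ - ‖localMultiplier ε R U p‖), sq_nonneg ‖∂ₜ U p‖]

/-- The constant in the bound of `localMomentum` by the energy. -/
def momentumConst (n : ℕ) (K : ℝ) : ℝ≥0∞ :=
  1 + n ^ 2 * (4 + ENNReal.ofReal (4 * cutoffBound * K))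

/-- The constant in the bound of the integral of `cutoffError` by the energy. -/
def errorConst (n : ℕ) (K : ℝ) : ℝ≥0∞ :=
  ENNReal.ofReal (24 * cutoffBound) + ENNReal.ofReal (34 * n ^ 2 * cutoffBound * K)

lemma IsWave.lintegral_hardyWeight_mul_norm_sq_le (hU : IsWave U) (hn : 3 ≤ n) (hε : 0 < ε)
    (hR : 0 < R) (hK : HasLocalL2Bound K R U) (ht : t ∈ Icc (-R) R) :
    ∫⁻ x, ENNReal.ofReal (hardyWeight ε R x * ‖U (t, x)‖ ^ 2) ≤
      (4 + ENNReal.ofReal (4 * cutoffBound * K)) * energy U 0 := by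
  have hM := cutoffBound_nonneg
  calc ∫⁻ x, ENNReal.ofReal (hardyWeight ε R x * ‖U (t, x)‖ ^ 2)
      ≤ 4 * energy U 0 + ENNReal.ofReal (4 * cutoffBound / R ^ 2)
          * (ENNReal.ofReal (K * R ^ 2) * energy U 0) := by
        refine (Morawetz.lintegral_hardyWeight_mul_norm_sq_le
          (contDiff_slice (hU.contDiff.of_le one_le_two) t) hn hε hR).trans ?_
        gcongr
        · exact (lintegral_gradNormSq_le_energy (hU.contDiff.differentiable two_ne_zero) t).trans
            (hU.energy_le t)
        · exact hK t ht
    _ = (4 + ENNReal.ofReal (4 * cutoffBound * K)) * energy U 0 := by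
        rw [← mul_assoc, ← ENNReal.ofReal_mul (by positivity), ← add_mul]
        congr 3
        field

lemma IsWave.ofReal_abs_localMomentum_le (hU : IsWave U) (hn : 3 ≤ n) (hε : 0 < ε)
    (hR : 0 < R) (hK : HasLocalL2Bound K R U) (ht : t ∈ Icc (-R) R) :
    ENNReal.ofReal |localMomentum ε R U t| ≤ momentumConst n K * energy U 0 := by
  have hmeas : Measurable fun x => ENNReal.ofReal (energyDensity U (t, x)) :=
    (contDiff_slice hU.contDiff_energyDensity t).continuous.measurable.ennreal_ofReal
  calc ENNReal.ofReal |localMomentum ε R U t|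
      ≤ ∫⁻ x, ENNReal.ofReal |⟪∂ₜ U (t, x), localMultiplier ε R U (t, x)⟫| := by
        simpa only [← Real.enorm_eq_ofReal_abs] using! enorm_integral_le_lintegral_enorm _
    _ ≤ ∫⁻ x, (ENNReal.ofReal (energyDensity U (t, x))
          + n ^ 2 * ENNReal.ofReal (hardyWeight ε R x * ‖U (t, x)‖ ^ 2)) := by
        refine lintegral_mono fun x => (ENNReal.ofReal_le_ofReal
          (abs_inner_localMultiplier_le hU.differentiableAt (by lia) hε)).trans ?_
        refine ENNReal.ofReal_add_le.trans_eq ?_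
        rw [ENNReal.ofReal_mul (by positivity), ENNReal.ofReal_pow (Nat.cast_nonneg n),
          ENNReal.ofReal_natCast]
    _ = energy U t + n ^ 2 * ∫⁻ x, ENNReal.ofReal (hardyWeight ε R x * ‖U (t, x)‖ ^ 2) := by
        rw [lintegral_add_left hmeas, lintegral_const_mul' _ _ (by finiteness), energy]
    _ ≤ energy U 0 + n ^ 2 * ((4 + ENNReal.ofReal (4 * cutoffBound * K)) * energy U 0) := by
        gcongr
        exacts [hU.energy_le t, hU.lintegral_hardyWeight_mul_norm_sq_le hn hε hR hK ht]
    _ = momentumConst n K * energy U 0 := by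
        rw [momentumConst]
        ring

lemma IsWave.lintegral_cutoffError_le (hU : IsWave U) (hn : 2 ≤ n) (hε : 0 < ε) (hR : 0 < R)
    (hK : HasLocalL2Bound K R U) (ht : t ∈ Icc (-R) R) :
    ∫⁻ x, ENNReal.ofReal (cutoffError ε R U (t, x)) ≤
      (ENNReal.ofReal (12 * cutoffBound * R⁻¹)
        + ENNReal.ofReal (17 * n ^ 2 * cutoffBound * K * R⁻¹)) * energy U 0 := by
  have hM := cutoffBound_nonneg
  have hmeas : Measurable fun x => ENNReal.ofReal (12 * cutoffBound * R⁻¹)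
      * ENNReal.ofReal (energyDensity U (t, x)) :=
    ((contDiff_slice hU.contDiff_energyDensity t).continuous.measurable.ennreal_ofReal).const_mul _
  calc ∫⁻ x, ENNReal.ofReal (cutoffError ε R U (t, x))
      ≤ ∫⁻ x in Metric.closedBall 0 (2 * R), (ENNReal.ofReal (12 * cutoffBound * R⁻¹)
          * ENNReal.ofReal (energyDensity U (t, x))
          + ENNReal.ofReal (17 * n ^ 2 * cutoffBound * R⁻¹ ^ 3)
            * ENNReal.ofReal (‖U (t, x)‖ ^ 2)) := by
        rw [← lintegral_indicator measurableSet_closedBall]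
        refine lintegral_mono fun x => (ENNReal.ofReal_le_ofReal
          ((le_abs_self _).trans (abs_cutoffError_le hU.differentiableAt hn hε hR))).trans ?_
        by_cases hx : x ∈ Metric.closedBall 0 (2 * R)
        · rw [indicator_of_mem hx, indicator_of_mem hx, ← ENNReal.ofReal_mul (by positivity),
            ← ENNReal.ofReal_mul (by positivity)]
          refine (congrArg ENNReal.ofReal ?_).trans_le ENNReal.ofReal_add_le
          ring
        · rw [indicator_of_notMem hx, indicator_of_notMem hx, ENNReal.ofReal_zero]
    _ ≤ ENNReal.ofReal (12 * cutoffBound * R⁻¹) * energy U 0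
          + ENNReal.ofReal (17 * n ^ 2 * cutoffBound * R⁻¹ ^ 3)
            * (ENNReal.ofReal (K * R ^ 2) * energy U 0) := by
        rw [lintegral_add_left hmeas, lintegral_const_mul' _ _ ENNReal.ofReal_ne_top,
          lintegral_const_mul' _ _ ENNReal.ofReal_ne_top]
        gcongr
        exacts [(setLIntegral_le_lintegral _ _).trans (hU.energy_le t), hK t ht]
    _ = _ := by
        rw [← mul_assoc, ← ENNReal.ofReal_mul (by positivity), ← add_mul]
        congr 3
        field

lemma IsWave.lintegral_slab_cutoffError_le (hU : IsWave U) (hn : 2 ≤ n) (hε : 0 < ε)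
    (hR : 0 < R) (hK : HasLocalL2Bound K R U) :
    ∫⁻ p in slab n (-R) R, ENNReal.ofReal (cutoffError ε R U p) ≤
      errorConst n K * energy U 0 := by
  have hM := cutoffBound_nonneg
  rw [volume_restrict_slab]
  calc ∫⁻ p, ENNReal.ofReal (cutoffError ε R U p) ∂(volume.restrict (Icc (-R) R)).prod volume
      ≤ ∫⁻ t in Icc (-R) R, ∫⁻ x, ENNReal.ofReal (cutoffError ε R U (t, x)) :=
        lintegral_prod_le _
    _ ≤ ∫⁻ _ in Icc (-R) R, (ENNReal.ofReal (12 * cutoffBound * R⁻¹)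
        + ENNReal.ofReal (17 * n ^ 2 * cutoffBound * K * R⁻¹)) * energy U 0 :=
        setLIntegral_mono' measurableSet_Icc fun t ht =>
          hU.lintegral_cutoffError_le hn hε hR hK ht
    _ = errorConst n K * energy U 0 := by
        rw [setLIntegral_const, Real.volume_Icc, mul_right_comm, add_mul,
          ← ENNReal.ofReal_mul (by positivity), ← ENNReal.ofReal_mul' (by linarith), errorConst]
        congr 3 <;> field

end LocalizedEstimate

section MorawetzEstimate

variable {n : ℕ} {V : Type*} [NormedAddCommGroup V] [InnerProductSpace ℝ V]
  {U : SpaceTime n → V} {ε R K : ℝ}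

lemma IsWave.ofReal_integral_slab_neg_localDivergence_le (hU : IsWave U) (hn : 3 ≤ n)
    (hε : 0 < ε) (hR : 0 < R) (hK : HasLocalL2Bound K R U) :
    ENNReal.ofReal (∫ p in slab n (-R) R, -localDivergence ε R U p) ≤
      2 * momentumConst n K * energy U 0 := by
  rw [integral_neg, hU.integral_slab_localDivergence hε hR]
  calc ENNReal.ofReal (-(localMomentum ε R U R - localMomentum ε R U (-R)))
      ≤ ENNReal.ofReal (|localMomentum ε R U R| + |localMomentum ε R U (-R)|) :=
        ENNReal.ofReal_le_ofReal ((neg_le_abs _).trans (abs_sub _ _))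
    _ ≤ ENNReal.ofReal |localMomentum ε R U R| + ENNReal.ofReal |localMomentum ε R U (-R)| :=
        ENNReal.ofReal_add_le
    _ ≤ momentumConst n K * energy U 0 + momentumConst n K * energy U 0 := by
        have hRR : -R ≤ R := by linarith
        exact add_le_add
          (hU.ofReal_abs_localMomentum_le hn hε hR hK (right_mem_Icc.2 hRR))
          (hU.ofReal_abs_localMomentum_le hn hε hR hK (left_mem_Icc.2 hRR))
    _ = 2 * momentumConst n K * energy U 0 := by ring

lemma IsWave.lintegral_slab_ballCutoff_mul_gradDensity_le (hU : IsWave U) (hn : 3 ≤ n)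
    (hε : 0 < ε) (hR : 0 < R) (hK : HasLocalL2Bound K R U) :
    ∫⁻ p in slab n (-R) R, ENNReal.ofReal (ballCutoff R p.2 * gradDensity ε U p) ≤
      (2 * momentumConst n K + errorConst n K) * energy U 0 := by
  have hζ := (contDiff_ballCutoff (n := n) (R := R) (k := 0)).continuous
  have hcont : Continuous fun p => ballCutoff R p.2 * gradDensity ε U p :=
    (hζ.comp continuous_snd).mul (hU.continuous_gradDensity hε)
  have hint : IntegrableOn (fun p => ballCutoff R p.2 * gradDensity ε U p) (slab n (-R) R) :=
    integrableOn_slab (ρ := 2 * R) hcont fun t _ x hx => by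
      rw [ballCutoff_eq_zero hR hx, zero_mul]
  rw [add_mul]
  refine (lintegral_ofReal_le_of_le_add
    (fun p => mul_nonneg ballCutoff_nonneg (gradDensity_nonneg hU.differentiableAt hε)) hint
    (hU.integrableOn_slab_localDivergence hε hR).neg
    fun p => hU.ballCutoff_mul_gradDensity_le hn hε).trans ?_
  exact add_le_add (hU.ofReal_integral_slab_neg_localDivergence_le hn hε hR hK)
    (hU.lintegral_slab_cutoffError_le (by lia) hε hR hK)

lemma closedBall_subset_slab (n : ℕ) (R : ℝ) :
    Metric.closedBall (0 : SpaceTime n) R ⊆ slab n (-R) R := fun p hp =>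
  ⟨abs_le.1 ((norm_fst_le p).trans (mem_closedBall_zero_iff.1 hp)), mem_univ _⟩

/-- The constant in the Morawetz estimate. -/
def morawetzConst (n : ℕ) : ℝ≥0∞ :=
  2 * (2 * momentumConst n (32 * 2 ^ n + 2) + errorConst n (32 * 2 ^ n + 2))

lemma morawetzConst_ne_top (n : ℕ) : morawetzConst n ≠ ∞ := by
  simp only [morawetzConst, momentumConst, errorConst]
  finiteness

theorem IsWave.lintegral_gradDensity_le (hU : IsWave U) (hn : 3 ≤ n) (hε : 0 < ε) :
    2 * ∫⁻ p, ENNReal.ofReal (gradDensity ε U p) ≤ morawetzConst n * energy U 0 := by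
  rw [morawetzConst, mul_assoc]
  gcongr
  have hmeas := (hU.continuous_gradDensity hε).measurable.ennreal_ofReal
  refine lintegral_le_of_forall_closedBall hmeas.aemeasurable 0 fun R hR => ?_
  obtain ⟨c, hc⟩ := hU.exists_hasLocalL2Bound_sub_const hR
  have hbound := (hU.sub_const c).lintegral_slab_ballCutoff_mul_gradDensity_le hn hε hR hc
  rw [gradDensity_sub_const, energy_sub_const] at hbound
  calc ∫⁻ p in Metric.closedBall 0 R, ENNReal.ofReal (gradDensity ε U p)
      = ∫⁻ p in Metric.closedBall 0 R, ENNReal.ofReal (ballCutoff R p.2 * gradDensity ε U p) :=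
        setLIntegral_congr_fun measurableSet_closedBall fun p hp => by
          rw [ballCutoff_eq_one hR ((norm_snd_le p).trans (mem_closedBall_zero_iff.1 hp)), one_mul]
    _ ≤ ∫⁻ p in slab n (-R) R, ENNReal.ofReal (ballCutoff R p.2 * gradDensity ε U p) :=
        lintegral_mono_set (closedBall_subset_slab n R)
    _ ≤ _ := hbound

theorem IsWave.lintegral_morawetzDensity_le (hU : IsWave U) (hn : 3 ≤ n) (hε : 0 < ε) :
    ∫⁻ t, ∫⁻ x, ENNReal.ofReal (morawetzDensity ε (fun y => U (t, y)) x) ≤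
      morawetzConst n * energy U 0 := by
  have hmeas := (hU.continuous_gradDensity hε).measurable.ennreal_ofReal
  calc ∫⁻ t, ∫⁻ x, ENNReal.ofReal (morawetzDensity ε (fun y => U (t, y)) x)
      ≤ ∫⁻ t, ∫⁻ x, 2 * ENNReal.ofReal (gradDensity ε U (t, x)) := by
        gcongr with t x
        rw [← ENNReal.ofReal_ofNat, ← ENNReal.ofReal_mul zero_le_two]
        exact ENNReal.ofReal_le_ofReal
          (morawetzDensity_le_two_mul_gradDensity (p := (t, x)) hU.differentiableAt hε)
    _ = 2 * ∫⁻ p, ENNReal.ofReal (gradDensity ε U p) := by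
        simp only [lintegral_const_mul' _ _ ENNReal.ofNat_ne_top]
        rw [Measure.volume_eq_prod, lintegral_prod _ hmeas.aemeasurable]
    _ ≤ morawetzConst n * energy U 0 := hU.lintegral_gradDensity_le hn hε

end MorawetzEstimate

section IsWaveSolution

variable {n : ℕ} {u : ℝ → Eucl n → ℂ}

lemma timeDeriv_eq {t : ℝ} {x : Eucl n}
    (hu : DifferentiableAt ℝ (fun p : SpaceTime n => u p.1 p.2) (t, x)) :
    timeDeriv u t x = ∂ₜ (fun p => u p.1 p.2) (t, x) :=
  (hasDerivAt_time_slice hu).deriv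

lemma lapE_eq {t : ℝ} {x : Eucl n} (hu : ContDiff ℝ 2 fun p : SpaceTime n => u p.1 p.2) :
    lapE (u t) x = ∑ i, ∂ₓ i (∂ₓ i fun p => u p.1 p.2) (t, x) := by
  refine Finset.sum_congr rfl fun i _ => ?_
  have hd : Differentiable ℝ (∂ₓ i fun p : SpaceTime n => u p.1 p.2) :=
    (contDiff_dirDeriv (k := 1) hu _).differentiable one_ne_zero
  rw [← dirDeriv_slice (hd (t, x))]
  simp only [← dirDeriv_slice (hu.differentiable two_ne_zero (t, _))]
  rfl

lemma isWave_of_isWaveSolution (hu : IsWaveSolution u) : IsWave fun p => u p.1 p.2 := by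
  have hc : ContDiff ℝ 2 fun p : SpaceTime n => u p.1 p.2 := contDiff_infty.1 hu.1 2
  refine ⟨hc, fun ⟨t, x⟩ => ?_⟩
  have ht : timeDeriv u = fun t x => ∂ₜ (fun p => u p.1 p.2) (t, x) := by
    ext t x
    exact timeDeriv_eq (hc.differentiable two_ne_zero _)
  have hd := (contDiff_dirDeriv (k := 1) hc (1, 0)).differentiable one_ne_zero (t, x)
  rw [← lapE_eq hc, ← hu.2 t x, ht, timeDeriv_eq hd]

lemma energy_eq (hu : ContDiff ℝ 1 fun p : SpaceTime n => u p.1 p.2) (t : ℝ) :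
    energy (fun p => u p.1 p.2) t =
      (∫⁻ x, ENNReal.ofReal (gradSq (u t) x)) + ∫⁻ x, (‖timeDeriv u t x‖₊ : ℝ≥0∞) ^ 2 := by
  have hmeas : Measurable fun x => ENNReal.ofReal (gradSq (u t) x) :=
    (continuous_gradNormSq (contDiff_slice hu t)).measurable.ennreal_ofReal
  rw [← lintegral_add_left hmeas, energy]
  refine lintegral_congr fun x => ?_
  have hd := hu.differentiable one_ne_zero (t, x)
  rw [energyDensity, ← gradNormSq_slice hd, ← timeDeriv_eq hd, add_comm,
    ENNReal.ofReal_add (gradNormSq_nonneg _ _) (sq_nonneg _),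
    ENNReal.ofReal_pow (norm_nonneg _), ofReal_norm, enorm_eq_nnnorm]
  rfl

lemma ofReal_morawetzDensity {ε : ℝ} (hε : 0 < ε) (f : Eucl n → ℂ) (x : Eucl n) :
    ENNReal.ofReal (morawetzDensity ε f x) =
      ENNReal.ofReal (ε / (ε + ‖x‖) ^ 2) * ENNReal.ofReal (radSq f x)
        + ENNReal.ofReal ((ε + ‖x‖)⁻¹) * ENNReal.ofReal (gradSq f x - radSq f x) := by
  have hrad : 0 ≤ radSq f x := sq_nonneg _
  have hang : 0 ≤ gradSq f x - radSq f x := sub_nonneg.2 (radialNormSq_le_gradNormSq f x)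
  rw [← ENNReal.ofReal_mul (by positivity), ← ENNReal.ofReal_mul (by positivity),
    ← ENNReal.ofReal_add (by positivity) (by positivity)]
  rfl

end IsWaveSolution

end

end Morawetz

theorem uniform_morawetz_general (n : ℕ) (hn : 3 ≤ n) :
    ∃ C : ℝ≥0∞, C ≠ ∞ ∧ ∀ ε : ℝ, 0 < ε →
      ∀ {V : Type*} [NormedAddCommGroup V] [InnerProductSpace ℝ V] (U : ℝ × Eucl n → V),
      Morawetz.IsWave U →
      ∫⁻ t, ∫⁻ x, ENNReal.ofReal (Morawetz.morawetzDensity ε (fun y => U (t, y)) x) ≤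
        C * Morawetz.energy U 0 :=
  ⟨Morawetz.morawetzConst n, Morawetz.morawetzConst_ne_top n,
    fun _ hε _ _ _ _ hU => hU.lintegral_morawetzDensity_le hn hε⟩

/-- uniform Morawetz estimate. -/
theorem uniform_morawetz (n : ℕ) (hn : 3 ≤ n) :
    ∃ C : ℝ≥0∞, C ≠ ∞ ∧ ∀ ε : ℝ, 0 < ε →
      ∀ u : ℝ → Eucl n → ℂ, IsWaveSolution u →
      (∫⁻ x : Eucl n, ENNReal.ofReal (gradSq (u 0) x)) +
          (∫⁻ x : Eucl n, (‖timeDeriv u 0 x‖₊ : ℝ≥0∞) ^ 2) ≠ ∞ →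
      (∫⁻ t : ℝ, ∫⁻ x : Eucl n,
          ENNReal.ofReal (ε / (ε + ‖x‖) ^ 2) * ENNReal.ofReal (radSq (u t) x) +
            ENNReal.ofReal ((ε + ‖x‖)⁻¹) *
              ENNReal.ofReal (gradSq (u t) x - radSq (u t) x)) ≤
        C * ((∫⁻ x : Eucl n, ENNReal.ofReal (gradSq (u 0) x)) +
          ∫⁻ x : Eucl n, (‖timeDeriv u 0 x‖₊ : ℝ≥0∞) ^ 2) := by
  obtain ⟨C, hC, hmor⟩ := uniform_morawetz_general n hn
  refine ⟨C, hC, fun ε hε u hu _ => ?_⟩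
  have hU := Morawetz.isWave_of_isWaveSolution hu
  simpa only [Morawetz.energy_eq (hU.contDiff.of_le one_le_two), Morawetz.ofReal_morawetzDensity hε]
    using hmor ε hε _ hU
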